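/- For each pair (m,n) with m,n ≥ 1, there is at most one indefinite ℰ-lattice T of signature (m,n), up to isometry, satisfying T = θT′. -/

import Mathlib

noncomputable section

open ComplexConjugate

namespace Bimonster

/-- The primitive cube root of unity `ω = e^{2πi/3}`. -/
def ω : ℂ := Complex.exp (2 * (Real.pi : ℂ) * Complex.I / 3)

/-- `θ = ω - ω̄ = √-3`. -/
def θ : ℂ := ω - conj ω

/-- `ξ = e^{-πi/6}`. -/
def ξ : ℂ := Complex.exp (-((Real.pi : ℂ) * Complex.I) / 6)

/-- Membership in the ring of Eisenstein integers `ℰ = ℤ[ω] ⊆ ℂ`. -/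
def EisP (z : ℂ) : Prop := ∃ a b : ℤ, z = (a : ℂ) + (b : ℂ) * ω

/-- The units of the ring of Eisenstein integers. -/
def EisUnit (z : ℂ) : Prop :=
  z = 1 ∨ z = -1 ∨ z = ω ∨ z = -ω ∨ z = ω ^ 2 ∨ z = -ω ^ 2

/-- A Hermitian matrix has signature `(m,n)` if it is equivalent, by an invertible
change of basis, to the diagonal matrix with `m` entries `1` and `n` entries `-1`. -/
def HasSignature (m n : ℕ) (M : Matrix (Fin (m + n)) (Fin (m + n)) ℂ) : Prop :=
  ∃ P : Matrix (Fin (m + n)) (Fin (m + n)) ℂ, IsUnit P.det ∧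
    P.conjTranspose * M * P =
      Matrix.diagonal fun i : Fin (m + n) => if (i : ℕ) < m then (1 : ℂ) else -1

/-- `M` is the Gram matrix of an `ℰ`-lattice `T` satisfying `T = θT′`: its entries
lie in `ℰ`, it is Hermitian, and `θM⁻¹` is a matrix over `ℰ` invertible over `ℰ`
(equivalently `{θe′_i}` is an `ℰ`-basis of `T` for the dual basis `e′`). -/
def SelfDualTheta {k : ℕ} (M : Matrix (Fin k) (Fin k) ℂ) : Prop :=
  (∀ i j, EisP (M i j)) ∧ M.IsHermitian ∧
    (∀ i j, EisP ((θ • M⁻¹) i j)) ∧ EisUnit (θ • M⁻¹).det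

/-!
Let `T = θT′`. A rational integer divisible by `θ` is divisible by `3 = θθ̄`, so `θ⁻¹⟨x, y⟩` induces
an alternating form on `T / θT`. If `W ⊆ T` is the preimage of a Lagrangian subspace, `S = θ⁻¹W` is
a unimodular lattice, in which `T` is in turn the preimage of a Lagrangian subspace of `S / θS`.
An indefinite unimodular `S` contains an isotropic vector: in rank two because its determinant is
a unit, in higher rank by a descent for ternary forms `a x x̄ + b y ȳ + c z z̄`. Hence `S` splits
off vectors of norm `±1`, is diagonalizable with entries `±1`, and is determined by its signature.
Finally, reflections in vectors of norm `±1` of `S` act transitively on the Lagrangian subspaces of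
`S / θS`, so any isometry between two such `S` can be corrected to one matching the sublattices `T`.
-/

theorem exists_four_mul_sq_sub_le (a : ℤ) {n : ℤ} (hn : n ≠ 0) :
    ∃ k : ℤ, 4 * (a - n * k) ^ 2 ≤ n ^ 2 := by
  have hn' : (n : ℚ) ≠ 0 := mod_cast hn
  set t : ℚ := a / n
  have hround : (t - round t) ^ 2 ≤ (1 / 2) ^ 2 :=
    sq_le_sq.2 ((abs_sub_round t).trans (le_abs_self _))
  have hmul : (a : ℚ) - n * round t = n * (t - round t) := by
    simp only [t]
    field_simp
  refine ⟨round t, ?_⟩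
  have : 4 * ((a : ℚ) - n * round t) ^ 2 ≤ n ^ 2 := by
    rw [hmul, mul_pow]
    nlinarith [sq_nonneg (n : ℚ)]
  exact_mod_cast this

/-- The ring `ℰ = ℤ[ω]` as an abstract ring: pairs `⟨a, b⟩` stand for `a + bω`, with
`ω² = -1 - ω`. Its `star` is complex conjugation. -/
abbrev Eis : Type := QuadraticAlgebra ℤ (-1) (-1)

namespace Eis

open scoped QuadraticAlgebra

/-- The element `θ = 1 + 2ω` of `ℰ`, a square root of `-3`. -/
def theta : Eis := ⟨1, 2⟩

theorem star_theta : star theta = -theta := by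
  ext <;> simp [theta]

theorem theta_mul_theta : theta * theta = -3 := by
  ext <;> simp [theta]

theorem theta_mul_star_theta : theta * star theta = 3 := by
  rw [star_theta, mul_neg, theta_mul_theta, neg_neg]

theorem theta_ne_zero : theta ≠ 0 := fun h => one_ne_zero (congrArg QuadraticAlgebra.re h)

theorem norm_eq (z : Eis) : z.norm = z.re ^ 2 - z.re * z.im + z.im ^ 2 := by
  rw [QuadraticAlgebra.norm_def]
  ring

theorem intCast_norm (z : Eis) : (z.norm : Eis) = z * star z :=
  z.algebraMap_norm_eq_mul_star

theorem norm_theta : theta.norm = 3 := by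
  simp [norm_eq, theta]

theorem four_mul_norm (z : Eis) : 4 * z.norm = (2 * z.re - z.im) ^ 2 + 3 * z.im ^ 2 := by
  rw [norm_eq]
  ring

theorem norm_nonneg (z : Eis) : 0 ≤ z.norm := by
  have hsum := four_mul_norm z
  nlinarith [sq_nonneg (2 * z.re - z.im), sq_nonneg z.im]

theorem norm_eq_zero {z : Eis} : z.norm = 0 ↔ z = 0 := by
  refine ⟨fun h => ?_, fun h => by rw [h, QuadraticAlgebra.norm_zero]⟩
  have hsum := four_mul_norm z
  have him : z.im = 0 := by nlinarith [sq_nonneg (2 * z.re - z.im), sq_nonneg z.im]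
  have hre : z.re = 0 := by rw [h, him] at hsum; nlinarith [sq_nonneg z.re]
  exact QuadraticAlgebra.ext hre him

theorem norm_pos {z : Eis} : 0 < z.norm ↔ z ≠ 0 := by
  rw [(norm_nonneg z).lt_iff_ne', ne_eq, norm_eq_zero]

instance : NoZeroDivisors Eis where
  eq_zero_or_eq_zero_of_mul_eq_zero {x y} h := by
    simpa only [map_mul, mul_eq_zero, norm_eq_zero, QuadraticAlgebra.norm_zero] using
      congrArg QuadraticAlgebra.norm h

instance : IsDomain Eis := NoZeroDivisors.to_isDomain Eis

theorem eq_intCast_re_of_star_eq {z : Eis} (hz : star z = z) : z = (z.re : Eis) := by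
  have him : z.im = 0 := by
    have := congrArg QuadraticAlgebra.im hz
    rw [QuadraticAlgebra.im_star] at this
    lia
  ext <;> simp [him]

theorem exists_norm_sub_intCast_mul_le (z : Eis) {n : ℤ} (hn : n ≠ 0) :
    ∃ q : Eis, 4 * (z - n * q).norm ≤ 3 * n ^ 2 := by
  obtain ⟨k, hk⟩ := exists_four_mul_sq_sub_le z.re hn
  obtain ⟨l, hl⟩ := exists_four_mul_sq_sub_le z.im hn
  refine ⟨⟨k, l⟩, ?_⟩
  have hre : (z - n * ⟨k, l⟩ : Eis).re = z.re - n * k := by simp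
  have him : (z - n * ⟨k, l⟩ : Eis).im = z.im - n * l := by simp
  rw [norm_eq, hre, him]
  nlinarith [sq_nonneg ((z.re - n * k) + (z.im - n * l))]

theorem exists_norm_sub_mul_lt (z : Eis) {w : Eis} (hw : w ≠ 0) :
    ∃ q : Eis, (z - w * q).norm < w.norm := by
  have hpos : 0 < w.norm := norm_pos.2 hw
  obtain ⟨q, hq⟩ := exists_norm_sub_intCast_mul_le (star w * z) hpos.ne'
  have hfactor : star w * z - w.norm * q = star w * (z - w * q) := by
    rw [intCast_norm]
    ring
  rw [hfactor, map_mul, QuadraticAlgebra.norm_star] at hq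
  exact ⟨q, by nlinarith⟩

instance : EuclideanDomain Eis where
  quotient z w := if hw : w = 0 then 0 else (exists_norm_sub_mul_lt z hw).choose
  quotient_zero z := dif_pos rfl
  remainder z w := z - w * if hw : w = 0 then 0 else (exists_norm_sub_mul_lt z hw).choose
  quotient_mul_add_remainder_eq z w := by ring
  r z w := z.norm.toNat < w.norm.toNat
  r_wellFounded := (measure fun z : Eis => z.norm.toNat).wf
  remainder_lt z w hw := by
    rw [dif_neg hw]
    exact (Int.toNat_lt_toNat (norm_pos.2 hw)).2 (exists_norm_sub_mul_lt z hw).choose_spec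
  mul_left_not_lt z w hw := by
    rw [map_mul, not_lt]
    exact Int.toNat_le_toNat (le_mul_of_one_le_right (norm_nonneg z) (norm_pos.2 hw))

/-- Reduction modulo `θ`; since `1 + 2ω = θ ≡ 0`, it sends `ω` to `1`. -/
def modTheta : Eis →+* ZMod 3 where
  toFun z := (z.re + z.im : ℤ)
  map_zero' := by simp
  map_one' := by simp
  map_add' z w := by
    simp only [QuadraticAlgebra.re_add, QuadraticAlgebra.im_add]
    push_cast
    ring
  map_mul' z w := by
    simp only [QuadraticAlgebra.re_mul, QuadraticAlgebra.im_mul]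
    push_cast
    linear_combination (-(z.im : ZMod 3) * w.im) * (by decide : (3 : ZMod 3) = 0)

theorem modTheta_apply (z : Eis) : modTheta z = (z.re + z.im : ℤ) := rfl

theorem modTheta_eq_zero {z : Eis} : modTheta z = 0 ↔ theta ∣ z := by
  refine ⟨fun h => ?_, ?_⟩
  · obtain ⟨k, hk⟩ := (ZMod.intCast_zmod_eq_zero_iff_dvd _ 3).1 h
    refine ⟨⟨2 * k - z.re, k - z.re⟩, ?_⟩
    ext
    · simp only [theta, QuadraticAlgebra.re_mul]
      ring
    · simp only [theta, QuadraticAlgebra.im_mul]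
      push_cast at hk
      linear_combination hk
  · rintro ⟨w, rfl⟩
    rw [map_mul, show modTheta theta = 0 from by decide, zero_mul]

theorem modTheta_star (z : Eis) : modTheta (star z) = modTheta z := by
  simp only [modTheta_apply, QuadraticAlgebra.re_star, QuadraticAlgebra.im_star]
  push_cast
  linear_combination (-(z.im : ZMod 3)) * (by decide : (3 : ZMod 3) = 0)

end Eis

namespace Eis

/-- The ternary Hermitian form `x x̄ + b y ȳ + c z z̄` has a nontrivial zero over `ℰ`. -/
def IsotropicTernary (b c : ℤ) : Prop :=
  ∃ x y z : Eis, (x ≠ 0 ∨ y ≠ 0 ∨ z ≠ 0) ∧ x.norm + b * y.norm + c * z.norm = 0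

namespace IsotropicTernary

variable {b c d : ℤ}

theorem symm : IsotropicTernary b c → IsotropicTernary c b
  | ⟨x, y, z, hne, hzero⟩ => ⟨x, z, y, by tauto, by linear_combination hzero⟩

theorem mul_norm_iff {t : Eis} (ht : t ≠ 0) :
    IsotropicTernary b (c * t.norm) ↔ IsotropicTernary b c := by
  constructor
  · rintro ⟨x, y, z, hne, hzero⟩
    refine ⟨x, y, t * z, by simpa [ht] using hne, ?_⟩
    rw [map_mul]
    linear_combination hzero
  · rintro ⟨x, y, z, hne, hzero⟩
    refine ⟨t * x, t * y, z, by simpa [ht] using hne, ?_⟩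
    simp only [map_mul]
    linear_combination t.norm * hzero

-- Multiplicativity of the norm `x x̄ + b y ȳ` of the quaternion algebra `x + yj`, `j² = -b`.
theorem norm_add_mul_norm_mul (b : ℤ) (x y x' y' : Eis) :
    (x.norm + b * y.norm) * (x'.norm + b * y'.norm) =
      (x * x' - b * y * star y').norm + b * (x * y' + y * star x').norm := by
  have key : (((x.norm + b * y.norm) * (x'.norm + b * y'.norm) : ℤ) : Eis) =
      (((x * x' - b * y * star y').norm + b * (x * y' + y * star x').norm : ℤ) : Eis) := by
    push_cast
    simp only [intCast_norm, star_sub, star_add, star_mul, star_star, star_intCast]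
    ring
  exact_mod_cast key

theorem mul_neg : IsotropicTernary b c → IsotropicTernary b d → IsotropicTernary b (-(c * d)) := by
  rintro ⟨x, y, z, hne, hzero⟩ ⟨x', y', z', hne', hzero'⟩
  by_cases hz : z = 0
  · exact ⟨x, y, 0, by simpa [hz] using hne, by simpa [hz] using hzero⟩
  by_cases hz' : z' = 0
  · exact ⟨x', y', 0, by simpa [hz'] using hne', by simpa [hz'] using hzero'⟩
  refine ⟨x * x' - b * y * star y', x * y' + y * star x', z * z',
    Or.inr (Or.inr (mul_ne_zero hz hz')), ?_⟩
  rw [← norm_add_mul_norm_mul, map_mul]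
  linear_combination (x'.norm + b * y'.norm) * hzero - c * z.norm * hzero'

theorem of_norm_add_eq_mul {x : Eis} (hx : x.norm + b = c * d) (hd : d ≠ 0)
    (h : IsotropicTernary b d) : IsotropicTernary b c := by
  have hprod : IsotropicTernary b (-(c * d)) :=
    ⟨x, 1, 1, Or.inr (Or.inl one_ne_zero), by rw [map_one]; linear_combination hx⟩
  have hnorm : -(d * -(c * d)) = c * (d : Eis).norm := by
    rw [QuadraticAlgebra.norm_intCast, Int.cast_id]
    ring
  exact (mul_norm_iff (Int.cast_ne_zero.2 hd)).1 (hnorm ▸ h.mul_neg hprod)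

end IsotropicTernary

theorem exists_prime_dvd_norm_add {p : ℕ} (hp : p.Prime) (hp2 : p ≠ 2) (hp3 : p ≠ 3) (b : ℤ) :
    ∃ x : Eis, (p : ℤ) ∣ x.norm + b := by
  have := Fact.mk hp
  have h3 : (3 : ZMod p) ≠ 0 := by
    rwa [← Nat.cast_ofNat, ne_eq, ZMod.natCast_eq_zero_iff,
      Nat.prime_dvd_prime_iff_eq hp Nat.prime_three]
  open Polynomial in
  have hroot : ∃ s t : ZMod p, s ^ 2 + (3 * t ^ 2 + b) = 0 := by
    obtain ⟨s, t, hst⟩ := FiniteField.exists_root_sum_quadratic (f := X ^ 2)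
      (g := C 3 * X ^ 2 + C 0 * X + C (b : ZMod p)) (degree_X_pow 2) (degree_quadratic h3)
      (by rw [ZMod.card]; exact hp.mod_two_eq_one_iff_ne_two.2 hp2)
    exact ⟨s, t, by simpa using hst⟩
  obtain ⟨s, t, hst⟩ := hroot
  obtain ⟨s, rfl⟩ := ZMod.intCast_surjective s
  obtain ⟨t, rfl⟩ := ZMod.intCast_surjective t
  -- The norm of `s + tθ` is `s² + 3t²`.
  refine ⟨⟨s + t, 2 * t⟩, (ZMod.intCast_zmod_eq_zero_iff_dvd _ p).1 ?_⟩
  rw [norm_eq]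
  push_cast
  linear_combination hst

theorem dvd_norm_sub_intCast_mul_sub_norm (c : ℤ) (x q : Eis) :
    c ∣ (x - c * q).norm - x.norm := by
  have hre : (x - c * q).re = x.re - c * q.re := by simp
  have him : (x - c * q).im = x.im - c * q.im := by simp
  refine ⟨c * q.norm - (2 * x.re * q.re - x.re * q.im - x.im * q.re + 2 * x.im * q.im), ?_⟩
  rw [norm_eq, norm_eq, norm_eq, hre, him]
  ring

theorem exists_prime_dvd_norm_add_lt {p : ℕ} (hp : p.Prime) (hp3 : p ≠ 3) {b : ℤ}
    (hb : b.natAbs ≤ p) : ∃ x : Eis, (p : ℤ) ∣ x.norm + b ∧ (x.norm + b).natAbs < p * p := by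
  by_cases hp2 : p = 2
  · subst hp2
    rcases Int.even_or_odd' b with ⟨k, hk | hk⟩
    · exact ⟨0, ⟨k, by simp [hk]⟩, by rw [QuadraticAlgebra.norm_zero]; lia⟩
    · exact ⟨1, ⟨k + 1, by rw [map_one]; lia⟩, by rw [map_one]; lia⟩
  have hp5 : 5 ≤ p := hp.five_le_of_ne_two_of_ne_three hp2 hp3
  obtain ⟨x, hx⟩ := exists_prime_dvd_norm_add hp hp2 hp3 b
  obtain ⟨q, hq⟩ := exists_norm_sub_intCast_mul_le x (n := p) (by lia)
  refine ⟨x - (p : ℤ) * q, ?_, ?_⟩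
  · rw [← sub_add_cancel (QuadraticAlgebra.norm _) x.norm, add_assoc]
    exact dvd_add (dvd_norm_sub_intCast_mul_sub_norm p x q) hx
  · have hnonneg := norm_nonneg (x - (p : ℤ) * q)
    have hsq : 5 * (p : ℤ) ≤ p ^ 2 := by nlinarith
    generalize (x - ((p : ℤ) : Eis) * q).norm = N at hq hnonneg ⊢
    zify at hb ⊢
    rw [abs_le] at hb
    rw [abs_lt]
    constructor <;> linarith

namespace IsotropicTernary

variable {b c : ℤ}

theorem of_forall_natAbs_lt (hc : c ≠ 0) (hbc : b.natAbs ≤ c.natAbs) (hneg : b < 0 ∨ c < 0)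
    (ih : ∀ d : ℤ, d ≠ 0 → b < 0 ∨ d < 0 → d.natAbs < c.natAbs → IsotropicTernary b d) :
    IsotropicTernary b c := by
  by_cases hc1 : c.natAbs = 1
  · have hcases : c = -1 ∨ b = -1 ∨ b = 0 := by lia
    rcases hcases with rfl | rfl | rfl
    · exact ⟨1, 0, 1, by simp, by simp⟩
    · exact ⟨1, 1, 0, by simp, by simp⟩
    · exact ⟨0, 1, 0, by simp, by simp⟩
  by_cases hprime : c.natAbs.Prime
  · by_cases hc3 : c.natAbs = 3
    · obtain ⟨e, rfl⟩ : (3 : ℤ) ∣ c := by lia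
      rw [mul_comm, ← norm_theta, mul_norm_iff theta_ne_zero]
      exact ih e (by lia) (by lia) (by lia)
    · obtain ⟨x, hdvd, hlt⟩ := exists_prime_dvd_norm_add_lt hprime hc3 hbc
      obtain ⟨d, hxd⟩ := Int.natAbs_dvd.1 hdvd
      have hdc : d.natAbs < c.natAbs := by
        rw [hxd, Int.natAbs_mul] at hlt
        exact lt_of_mul_lt_mul_left hlt (Nat.zero_le _)
      by_cases hd : d = 0
      · exact ⟨x, 1, 0, by simp, by simpa [hd] using hxd⟩
      have hsign : b < 0 ∨ d < 0 := by
        have := norm_nonneg x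
        by_contra! hpos
        have : c * d < 0 := mul_neg_of_neg_of_pos (hneg.resolve_left hpos.1.not_gt) (by lia)
        lia
      exact of_norm_add_eq_mul hxd hd (ih d hd hsign hdc)
  · obtain ⟨r, s, hr, hs, hrs⟩ := (Nat.not_prime_iff_exists_mul_eq (by lia)).1 hprime
    obtain ⟨e, rfl⟩ : (r : ℤ) ∣ c := Int.natCast_dvd.2 ⟨s, hrs.symm⟩
    obtain ⟨hr0, he0⟩ := mul_ne_zero_iff.1 hc
    have hes : e.natAbs = s := by
      rw [Int.natAbs_mul, Int.natAbs_natCast] at hrs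
      exact Nat.eq_of_mul_eq_mul_left (by lia) hrs.symm
    have hsign : b < 0 ∨ e < 0 := hneg.imp_right fun h => (pos_iff_neg_of_mul_neg h).1 (by lia)
    have hr := ih (-r) (by lia) (Or.inr (by lia)) (by lia)
    simpa only [neg_mul, neg_neg] using hr.mul_neg (ih e he0 hsign (by lia))

theorem of_neg (hb : b ≠ 0) (hc : c ≠ 0) (hneg : b < 0 ∨ c < 0) : IsotropicTernary b c := by
  induction hk : b.natAbs + c.natAbs using Nat.strong_induction_on generalizing b c with
  | _ k ih =>
    rcases le_total b.natAbs c.natAbs with hbc | hcb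
    · exact of_forall_natAbs_lt hc hbc hneg fun d hd hd' hdc => ih _ (by lia) hb hd hd' rfl
    · exact (of_forall_natAbs_lt hb hcb hneg.symm fun d hd hd' hdb =>
        ih _ (by lia) hc hd hd' rfl).symm

end IsotropicTernary

theorem exists_mul_norm_add_eq_zero {a b c : ℤ} (ha : 0 < a) (hb : b < 0) (hc : c ≠ 0) :
    ∃ x y z : Eis, (x ≠ 0 ∨ y ≠ 0 ∨ z ≠ 0) ∧ a * x.norm + b * y.norm + c * z.norm = 0 := by
  obtain ⟨x, y, z, hne, hzero⟩ := IsotropicTernary.of_neg (mul_ne_zero ha.ne' hb.ne)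
    (mul_ne_zero ha.ne' hc) (Or.inl (mul_neg_of_pos_of_neg ha hb))
  refine ⟨x, a * y, a * z, by simpa [ha.ne'] using hne, ?_⟩
  rw [map_mul, map_mul, QuadraticAlgebra.norm_intCast, Int.cast_id]
  linear_combination a * hzero

end Eis

theorem exists_smul_eq_of_forall_exists {R M N : Type*} [CommRing R] [IsDomain R]
    [AddCommGroup M] [Module R M] [AddCommGroup N] [Module R N] [Module.IsTorsionFree R N]
    {σ : R →+* R} {f : M →ₛₗ[σ] N} {π : R} (hπ : π ≠ 0) (hf : ∀ x, ∃ y, π • y = f x) :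
    ∃ g : M →ₛₗ[σ] N, π • g = f := by
  choose g hg using hf
  refine ⟨⟨⟨g, fun x y => smul_right_injective N hπ ?_⟩, fun c x => smul_right_injective N hπ ?_⟩,
    LinearMap.ext hg⟩
  · simp only [smul_add, hg, map_add]
  · simp only [smul_comm π, hg, map_smulₛₗ]

section SesquilinearForms

variable {R L : Type*} [CommRing R] [StarRing R] [AddCommGroup L] [Module R L]
  {h : L →ₗ⋆[R] L →ₗ[R] R} {π : R}

/-- `h` is a nondegenerate Hermitian form for which the lattice `L` equals `π` times its dual.
The case `π = 1` is that of unimodular lattices. -/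
structure IsModular (π : R) (h : L →ₗ⋆[R] L →ₗ[R] R) : Prop where
  isSymm : h.IsSymm
  injective : Function.Injective h
  dvd (x y : L) : π ∣ h x y
  exists_eq_smul (f : Module.Dual R L) : ∃ x, h x = π • f

/-- The lattice `L` equals its dual with respect to `h`. -/
abbrev IsUnimodular (h : L →ₗ⋆[R] L →ₗ[R] R) : Prop := IsModular 1 h

/-- The Gram matrix of the family `e` is diagonal, with entries `a`. -/
def HasDiagonalGram {ι : Type*} [DecidableEq ι] (h : L →ₗ⋆[R] L →ₗ[R] R) (e : ι → L) (a : ι → R) :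
    Prop :=
  ∀ i j, h (e i) (e j) = if i = j then a i else 0

theorem IsUnimodular.exists_eq (hu : IsUnimodular h) (f : Module.Dual R L) : ∃ x, h x = f := by
  simpa only [one_smul] using hu.exists_eq_smul f

theorem IsUnimodular.isUnit_det_gram {ι : Type*} [Fintype ι] [DecidableEq ι]
    (hu : IsUnimodular h) (B : Module.Basis ι R L) :
    IsUnit (Matrix.of fun i j => h (B i) (B j)).det := by
  choose x hx using fun i => hu.exists_eq (B.coord i)
  refine Matrix.isUnit_det_of_left_inverse (B := Matrix.of fun i k => star (B.repr (x i) k)) ?_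
  ext i j
  have hij : h (∑ k, B.repr (x i) k • B k) (B j) = (1 : Matrix ι ι R) i j := by
    rw [B.sum_repr, hx, B.coord_apply, B.repr_self, Finsupp.single_apply, Matrix.one_apply]
    simp only [eq_comm]
  simp only [map_sum, map_smulₛₗ, LinearMap.sum_apply, LinearMap.smul_apply, smul_eq_mul] at hij
  exact hij

theorem IsUnimodular.domRestrict_ker (hu : IsUnimodular h) {u : L} (huu : IsUnit (h u u)) :
    IsUnimodular (h.domRestrict₁₂ (h u).ker (h u).ker) := by
  obtain ⟨c, hc⟩ := huu.exists_right_inv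
  have hmem (x : L) : x - (c * h u x) • u ∈ (h u).ker := by
    rw [LinearMap.mem_ker, map_sub, map_smul, smul_eq_mul]
    linear_combination -h u x * hc
  let proj : L →ₗ[R] (h u).ker :=
    (LinearMap.id - (c • h u).smulRight u).codRestrict (h u).ker (by simpa using hmem)
  have hproj (x : L) : (proj x : L) = x - (c * h u x) • u := rfl
  have hproj_of_mem (x : (h u).ker) : proj x = x := by
    ext
    rw [hproj, x.2, mul_zero, zero_smul, sub_zero]
  have hproj_self : proj u = 0 := by
    ext
    rw [hproj, mul_comm, hc, one_smul, sub_self, ZeroMemClass.coe_zero]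
  have heq (x : (h u).ker) (y : L) : h x y = h x (proj y) := by
    rw [hproj, map_sub, map_smul, hu.isSymm.eq_iff.1 x.2, smul_zero, sub_zero]
  refine ⟨hu.isSymm.domRestrict _, fun x y hxy => ?_, fun _ _ => one_dvd _, fun f => ?_⟩
  · refine Subtype.ext (hu.injective (LinearMap.ext fun z => ?_))
    rw [heq x, heq y]
    exact LinearMap.congr_fun hxy (proj z)
  · obtain ⟨x, hx⟩ := hu.exists_eq (f ∘ₗ proj)
    have hxu : x ∈ (h u).ker := by
      rw [LinearMap.mem_ker, hu.isSymm.eq_iff, hx, LinearMap.comp_apply, hproj_self, map_zero]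
    refine ⟨⟨x, hxu⟩, LinearMap.ext fun y => ?_⟩
    rw [LinearMap.domRestrict₁₂_apply, hx, LinearMap.comp_apply, hproj_of_mem, one_smul]

theorem HasDiagonalGram.exists_basis_cons (hs : h.IsSymm) {u : L} (huu : IsUnit (h u u)) {n : ℕ}
    {B : Module.Basis (Fin n) R (h u).ker} {a : Fin n → R}
    (hB : HasDiagonalGram (h.domRestrict₁₂ (h u).ker (h u).ker) B a) :
    ∃ B' : Module.Basis (Fin (n + 1)) R L,
      HasDiagonalGram h B' (Fin.cons (h u u) a : Fin (n + 1) → R) := by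
  obtain ⟨c, hc⟩ := huu.exists_right_inv
  have hindep (d : R) (x : L) (hx : x ∈ (h u).ker) (hdx : d • u + x = 0) : d = 0 := by
    have := congrArg (h u) hdx
    rw [map_add, hx, map_smul, map_zero, add_zero, smul_eq_mul] at this
    exact huu.mul_left_eq_zero.1 this
  have hspan (z : L) : ∃ d : R, z + d • u ∈ (h u).ker := by
    refine ⟨-(c * h u z), ?_⟩
    rw [LinearMap.mem_ker, map_add, map_smul, smul_eq_mul]
    linear_combination -h u z * hc
  refine ⟨Module.Basis.mkFinCons u B hindep hspan, fun i j => ?_⟩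
  rw [Module.Basis.coe_mkFinCons]
  have hu (k : Fin n) : h u (B k) = 0 := (B k).2
  cases i using Fin.cases <;> cases j using Fin.cases
  · simp
  · simp [hu, (Fin.succ_ne_zero _).symm]
  · simp [hs.eq_iff.1 (hu _)]
  · simpa [LinearMap.domRestrict₁₂_apply] using hB _ _

theorem HasDiagonalGram.exists_isometry {L' : Type*} [AddCommGroup L'] [Module R L']
    {h' : L' →ₗ⋆[R] L' →ₗ[R] R} {ι κ : Type*} [DecidableEq ι] [DecidableEq κ]
    {B : Module.Basis ι R L} {B' : Module.Basis κ R L'} {a : ι → R} {a' : κ → R}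
    (hB : HasDiagonalGram h B a) (hB' : HasDiagonalGram h' B' a') (σ : ι ≃ κ)
    (hσ : ∀ i, a' (σ i) = a i) : ∃ g : L ≃ₗ[R] L', ∀ x y, h' (g x) (g y) = h x y := by
  refine ⟨B.equiv B' σ, fun x y => ?_⟩
  suffices (h'.comp (B.equiv B' σ).toLinearMap).compl₂ (B.equiv B' σ).toLinearMap = h from
    LinearMap.congr_fun₂ this x y
  refine B.ext fun i => B.ext fun j => ?_
  simp [hB i j, hB' (σ i) (σ j), hσ]

theorem finrank_ker_lt_finrank_of_isUnit [IsDomain R] [Module.Finite R L] {u : L}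
    (huu : IsUnit (h u u)) : Module.finrank R (h u).ker < Module.finrank R L := by
  obtain ⟨c, hc⟩ := huu.exists_right_inv
  have hsurj : Function.Surjective (h u) := fun a =>
    ⟨(c * a) • u, by rw [map_smul, smul_eq_mul]; linear_combination a * hc⟩
  have hsum := (h u).ker.finrank_quotient_add_finrank
  rw [((h u).quotKerEquivOfSurjective hsurj).finrank_eq, Module.finrank_self] at hsum
  lia

theorem IsUnimodular.exists_hyperbolic_pair [IsDomain R] [IsPrincipalIdealRing R]
    (hu : IsUnimodular h) {v : L} (hv : v ≠ 0) (hvv : h v v = 0) :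
    ∃ e f, h e e = 0 ∧ h e f = 1 := by
  obtain ⟨g, hg⟩ := IsPrincipalIdealRing.principal (LinearMap.range (h v))
  have hg0 : g ≠ 0 := by
    rintro rfl
    rw [Submodule.span_zero_singleton, LinearMap.range_eq_bot] at hg
    exact hv (hu.injective (hg.trans (map_zero h).symm))
  have hdvd (y : L) : ∃ c, g • c = h v y := by
    obtain ⟨c, hc⟩ := Submodule.mem_span_singleton.1 (hg ▸ LinearMap.mem_range_self (h v) y)
    exact ⟨c, by rw [← hc, smul_eq_mul, smul_eq_mul, mul_comm]⟩
  obtain ⟨c, hc⟩ := exists_smul_eq_of_forall_exists hg0 hdvd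
  obtain ⟨e, rfl⟩ := hu.exists_eq c
  obtain ⟨f, hf⟩ : g ∈ LinearMap.range (h v) := hg ▸ Submodule.mem_span_singleton_self g
  have hve : v = star g • e := hu.injective (by rw [map_smulₛₗ, ← hc, starRingEnd_apply, star_star])
  refine ⟨e, f, ?_, mul_left_cancel₀ hg0 ?_⟩
  · simpa [hve, hg0, starRingEnd_apply] using hvv
  · rw [← smul_eq_mul, ← LinearMap.smul_apply, hc, hf, mul_one]

end SesquilinearForms

section HermitianForms

variable {L : Type*} [AddCommGroup L] [Module Eis L] {h : L →ₗ⋆[Eis] L →ₗ[Eis] Eis}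

/-- The norm `⟨x, x⟩` of a vector as an integer; meaningful when `h` is Hermitian, so that
`h x x` is real. -/
def intNorm (h : L →ₗ⋆[Eis] L →ₗ[Eis] Eis) (x : L) : ℤ := (h x x).re

/-- The Hermitian form `h` takes both positive and negative norms. -/
def IsIndefinite (h : L →ₗ⋆[Eis] L →ₗ[Eis] Eis) : Prop :=
  (∃ x, 0 < intNorm h x) ∧ ∃ x, intNorm h x < 0

theorem intCast_intNorm (hs : h.IsSymm) (x : L) : (intNorm h x : Eis) = h x x :=
  (Eis.eq_intCast_re_of_star_eq (hs.eq x x)).symm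

theorem intNorm_eq_iff (hs : h.IsSymm) {x : L} {a : ℤ} : intNorm h x = a ↔ h x x = a := by
  rw [← intCast_intNorm hs, Int.cast_inj]

theorem intNorm_smul (h : L →ₗ⋆[Eis] L →ₗ[Eis] Eis) (s : Eis) (x : L) :
    intNorm h (s • x) = s.norm * intNorm h x := by
  have : h (s • x) (s • x) = (s.norm : Eis) * h x x := by
    rw [Eis.intCast_norm, map_smul, LinearMap.map_smulₛₗ, LinearMap.smul_apply, starRingEnd_apply,
      smul_eq_mul, smul_eq_mul, mul_assoc]
  rw [intNorm, this]
  simp [intNorm]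

theorem intNorm_add_of_apply_eq_zero (hs : h.IsSymm) {x y : L} (hxy : h x y = 0) :
    intNorm h (x + y) = intNorm h x + intNorm h y := by
  simp [intNorm, hxy, hs.eq_iff.1 hxy]

theorem eq_zero_of_forall_intNorm_eq_zero (hs : h.IsSymm) (h0 : ∀ x, intNorm h x = 0) : h = 0 := by
  have hself (x : L) : h x x = 0 := by rw [← intCast_intNorm hs, h0, Int.cast_zero]
  have htrace (x y : L) : h x y + star (h x y) = 0 := by
    rw [← starRingEnd_apply, hs.eq]
    simpa [hself] using hself (x + y)
  ext x y : 2
  have h1 := htrace x y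
  have h2 := htrace x ((⟨0, 1⟩ : Eis) • y)
  simp only [map_smul, smul_eq_mul, QuadraticAlgebra.ext_iff, QuadraticAlgebra.re_add,
    QuadraticAlgebra.re_star, QuadraticAlgebra.re_mul, QuadraticAlgebra.im_mul,
    QuadraticAlgebra.re_zero] at h1 h2
  refine QuadraticAlgebra.ext ?_ ?_ <;> simp <;> lia

theorem intNorm_mul_intNorm_smul_add_smul (hs : h.IsSymm) (x y : L) (s t : Eis) :
    intNorm h x * intNorm h (s • x + t • y) =
      (intNorm h x * s + h x y * t).norm +
        t.norm * (intNorm h x * intNorm h y - (h x y).norm) := by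
  have hyx : h y x = star (h x y) := (hs.eq x y).symm
  apply Int.cast_injective (α := Eis)
  push_cast
  simp only [Eis.intCast_norm, intCast_intNorm hs, map_add, map_smulₛₗ,
    LinearMap.add_apply, LinearMap.smul_apply, smul_eq_mul, hyx, star_add, star_mul',
    RingHom.id_apply, starRingEnd_apply]
  rw [show star (h x x) = h x x from hs.eq x x]
  ring

theorem exists_isotropic_of_orthogonal (hs : h.IsSymm) {x y z : L} (hx : 0 < intNorm h x)
    (hy : intNorm h y < 0) (hz : z ≠ 0) (hxy : h x y = 0) (hxz : h x z = 0) (hyz : h y z = 0) :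
    ∃ v ≠ 0, h v v = 0 := by
  by_cases hqz : intNorm h z = 0
  · exact ⟨z, hz, by rw [← intCast_intNorm hs, hqz, Int.cast_zero]⟩
  obtain ⟨a, b, c, hne, habc⟩ := Eis.exists_mul_norm_add_eq_zero hx hy hqz
  refine ⟨a • x + b • y + c • z, fun hv => ?_, ?_⟩
  · have hxx : h x x ≠ 0 := by rw [← intCast_intNorm hs]; exact_mod_cast hx.ne'
    have hyy : h y y ≠ 0 := by rw [← intCast_intNorm hs]; exact_mod_cast hy.ne
    have ha : a = 0 := by simpa [hxy, hxz, hxx] using congrArg (h x) hv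
    have hb : b = 0 := by simpa [hyz, hs.eq_iff.1 hxy, hyy] using congrArg (h y) hv
    have hzz : h z z ≠ 0 := by rw [← intCast_intNorm hs]; exact_mod_cast hqz
    have hc : c = 0 := by
      simpa [hs.eq_iff.1 hxz, hs.eq_iff.1 hyz, hzz] using congrArg (h z) hv
    simp [ha, hb, hc] at hne
  · rw [← intCast_intNorm hs, intNorm_add_of_apply_eq_zero hs (by simp [hxz, hyz]),
      intNorm_add_of_apply_eq_zero hs (by simp [hxy]), intNorm_smul, intNorm_smul, intNorm_smul]
    exact_mod_cast (by linear_combination habc)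

theorem exists_isotropic_of_basis_fin_two (hu : IsUnimodular h) (hi : IsIndefinite h)
    (B : Module.Basis (Fin 2) Eis L) : ∃ v ≠ 0, h v v = 0 := by
  have hs := hu.isSymm
  set a := intNorm h (B 0)
  set D := a * intNorm h (B 1) - (h (B 0) (B 1)).norm
  have hgram (s t : Eis) := intNorm_mul_intNorm_smul_add_smul hs (B 0) (B 1) s t
  have hdet : IsUnit D := by
    have hunit := hu.isUnit_det_gram B
    have : (Matrix.of fun i j => h (B i) (B j)).det = (D : Eis) := by
      simp [Matrix.det_fin_two, D, a, intCast_intNorm hs, Eis.intCast_norm, ← hs.eq (B 0) (B 1),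
        starRingEnd_apply]
    rw [this, QuadraticAlgebra.isUnit_iff_norm_isUnit, QuadraticAlgebra.norm_intCast] at hunit
    exact (isUnit_pow_iff two_ne_zero).1 hunit
  have ha_of_pos (hD : 0 < D) (v : L) : 0 ≤ a * intNorm h v := by
    rw [← B.sum_repr v, Fin.sum_univ_two, hgram]
    exact add_nonneg (Eis.norm_nonneg _) (mul_nonneg (Eis.norm_nonneg _) hD.le)
  by_cases ha : a = 0
  · exact ⟨B 0, B.ne_zero 0, by rw [← intCast_intNorm hs]; exact_mod_cast ha⟩
  obtain hD | hD := Int.isUnit_iff.1 hdet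
  · obtain ⟨⟨x, hx⟩, y, hy⟩ := hi
    have hax := ha_of_pos (hD ▸ one_pos) x
    have hay := ha_of_pos (hD ▸ one_pos) y
    obtain ha | ha := lt_or_gt_of_ne ha <;> nlinarith
  · refine ⟨(1 - h (B 0) (B 1)) • B 0 + (a : Eis) • B 1, fun hv => ha ?_, ?_⟩
    · simpa using congrArg (fun v => B.repr v 1) hv
    · rw [← Int.cast_zero, ← intNorm_eq_iff hs, ← mul_right_inj' ha, hgram]
      change _ + _ * D = _
      rw [hD, show (a : Eis) * (1 - h (B 0) (B 1)) + h (B 0) (B 1) * a = a by ring]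
      ring

end HermitianForms

section UnimodularDiagonalization

variable {L : Type*} [AddCommGroup L] [Module Eis L] {h : L →ₗ⋆[Eis] L →ₗ[Eis] Eis}

theorem IsIndefinite.exists_orthogonal (hs : h.IsSymm) (hi : IsIndefinite h) :
    ∃ x y, 0 < intNorm h x ∧ intNorm h y < 0 ∧ h x y = 0 := by
  obtain ⟨⟨x, hx⟩, y, hy⟩ := hi
  refine ⟨x, -(h x y) • x + (intNorm h x : Eis) • y, hx, ?_, ?_⟩
  · have hgram := intNorm_mul_intNorm_smul_add_smul hs x y (-(h x y)) (intNorm h x)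
    rw [show (intNorm h x : Eis) * -(h x y) + h x y * intNorm h x = 0 by ring,
      QuadraticAlgebra.norm_zero, zero_add, QuadraticAlgebra.norm_intCast, Int.cast_id] at hgram
    refine neg_of_mul_neg_right (hgram.trans_lt (mul_neg_of_pos_of_neg (pow_pos hx 2) ?_)) hx.le
    nlinarith [Eis.norm_nonneg (h x y)]
  · simp only [map_add, map_smul, smul_eq_mul, intCast_intNorm hs]
    ring

theorem IsIndefinite.exists_isotropic [Module.Free Eis L] [Module.Finite Eis L]
    (hu : IsUnimodular h) (hi : IsIndefinite h) : ∃ v ≠ 0, h v v = 0 := by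
  have hs := hu.isSymm
  obtain ⟨x, y, hx, hy, hxy⟩ := hi.exists_orthogonal hs
  by_cases hz : ∃ z ≠ 0, h x z = 0 ∧ h y z = 0
  · obtain ⟨z, hz, hxz, hyz⟩ := hz
    exact exists_isotropic_of_orthogonal hs hx hy hz hxy hxz hyz
  push Not at hz
  have hinj : Function.Injective ((h x).prod (h y)) := by
    refine (injective_iff_map_eq_zero _).2 fun z hz' => by_contra fun hz0 => ?_
    exact hz z hz0 (congrArg Prod.fst hz') (congrArg Prod.snd hz')
  have hxx : h x x ≠ 0 := by rw [← intCast_intNorm hs]; exact_mod_cast hx.ne'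
  have hyy : h y y ≠ 0 := by rw [← intCast_intNorm hs]; exact_mod_cast hy.ne
  have hindep : LinearIndependent Eis ![x, y] := LinearIndependent.pair_iff.2 fun s t hst =>
    ⟨by simpa [hxy, hxx] using congrArg (h x) hst,
      by simpa [hs.eq_iff.1 hxy, hyy] using congrArg (h y) hst⟩
  have hrank : Module.finrank Eis L = 2 := by
    apply le_antisymm
    · simpa using LinearMap.finrank_le_finrank_of_injective hinj
    · simpa using hindep.fintype_card_le_finrank
  exact exists_isotropic_of_basis_fin_two hu hi (Module.finBasisOfFinrankEq Eis L hrank)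

theorem IsIndefinite.exists_orthogonal_units [Module.Free Eis L] [Module.Finite Eis L]
    (hu : IsUnimodular h) (hi : IsIndefinite h) :
    ∃ u w, h u u = 1 ∧ h w w = -1 ∧ h u w = 0 := by
  obtain ⟨v, hv, hvv⟩ := hi.exists_isotropic hu
  obtain ⟨e, f, hee, hef⟩ := hu.exists_hyperbolic_pair hv hvv
  have hs := hu.isSymm
  have hfe : h f e = 1 := by rw [← hs.eq, hef, map_one]
  -- `s` has trace `1 - ⟨f, f⟩`, so that `f + s e` has norm `1`
  let s : Eis := ⟨0, intNorm h f - 1⟩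
  have hs_trace : h f f + s + star s = 1 := by
    rw [← intCast_intNorm hs]
    ext <;> simp only [QuadraticAlgebra.re_add, QuadraticAlgebra.im_add, QuadraticAlgebra.re_star,
      QuadraticAlgebra.im_star, QuadraticAlgebra.re_intCast, QuadraticAlgebra.im_intCast,
      QuadraticAlgebra.re_one, QuadraticAlgebra.im_one, Int.cast_id, s] <;> lia
  have heu : h e (f + s • e) = 1 := by simp [hef, hee]
  have hue : h (f + s • e) e = 1 := by simp [hfe, hee]
  have huu : h (f + s • e) (f + s • e) = 1 := by
    simpa [hef, hfe, hee, starRingEnd_apply, add_assoc, add_comm, add_left_comm] using hs_trace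
  refine ⟨f + s • e, e - (f + s • e), huu, ?_, ?_⟩
  · simp only [map_sub, LinearMap.sub_apply, hee, heu, hue, huu]
    ring
  · rw [map_sub, hue, huu, sub_self]

/-- The lattice `(L, h)` has an orthogonal basis of vectors of norms `1` and `-1`. -/
def IsSignDiagonalizable (h : L →ₗ⋆[Eis] L →ₗ[Eis] Eis) : Prop :=
  ∃ (n : ℕ) (B : Module.Basis (Fin n) Eis L) (ε : Fin n → ℤˣ),
    HasDiagonalGram h B fun i => ((ε i : ℤ) : Eis)

theorem IsSignDiagonalizable.of_ker (hs : h.IsSymm) {u : L} (ε : ℤˣ) (huu : h u u = (ε : ℤ))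
    (hker : IsSignDiagonalizable (h.domRestrict₁₂ (h u).ker (h u).ker)) :
    IsSignDiagonalizable h := by
  obtain ⟨n, B, δ, hB⟩ := hker
  have hunit : IsUnit (h u u) := huu ▸ ε.isUnit.map (Int.castRingHom Eis)
  obtain ⟨B', hB'⟩ := hB.exists_basis_cons hs hunit
  refine ⟨n + 1, B', Fin.cons ε δ, fun i j => (hB' i j).trans ?_⟩
  cases i using Fin.cases <;> simp [huu]

theorem isSignDiagonalizable_of_forall_intNorm_eq_zero (hu : IsUnimodular h)
    (h0 : ∀ x, intNorm h x = 0) : IsSignDiagonalizable h := by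
  have hzero := eq_zero_of_forall_intNorm_eq_zero hu.isSymm h0
  have : Subsingleton L := ⟨fun x y => hu.injective (by rw [hzero]; rfl)⟩
  exact ⟨0, Module.Basis.empty L, 1, fun i => i.elim0⟩

theorem IsIndefinite.isSignDiagonalizable [Module.Free Eis L] [Module.Finite Eis L]
    (hu : IsUnimodular h) (hi : IsIndefinite h) : IsSignDiagonalizable h := by
  induction hr : Module.finrank Eis L using Nat.strong_induction_on generalizing L with
  | h r ih =>
    obtain ⟨u, w, huu, hww, huw⟩ := hi.exists_orthogonal_units hu
    have hs := hu.isSymm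
    have hwu : h w u = 0 := hs.eq_iff.1 huw
    have hu_unit : IsUnit (h u u) := huu ▸ isUnit_one
    have hw_unit : IsUnit (h w w) := hww ▸ isUnit_one.neg
    have hqu : intNorm h u = 1 := (intNorm_eq_iff hs).2 (by simp [huu])
    have hqw : intNorm h w = -1 := (intNorm_eq_iff hs).2 (by simp [hww])
    by_cases hpos : ∃ z ∈ (h u).ker, 0 < intNorm h z
    · obtain ⟨z, hz, hqz⟩ := hpos
      refine .of_ker hs 1 (by simp [huu]) (ih _ (hr ▸ finrank_ker_lt_finrank_of_isUnit hu_unit)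
        (hu.domRestrict_ker hu_unit) ⟨⟨⟨z, hz⟩, hqz⟩, ⟨⟨w, huw⟩, ?_⟩⟩ rfl)
      exact hqw.trans_lt neg_one_lt_zero
    by_cases hneg : ∃ z ∈ (h w).ker, intNorm h z < 0
    · obtain ⟨z, hz, hqz⟩ := hneg
      refine .of_ker hs (-1) (by simp [hww]) (ih _ (hr ▸ finrank_ker_lt_finrank_of_isUnit hw_unit)
        (hu.domRestrict_ker hw_unit) ⟨⟨⟨u, hwu⟩, ?_⟩, ⟨⟨z, hz⟩, hqz⟩⟩ rfl)
      exact one_pos.trans_eq hqu.symm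
    push Not at hpos hneg
    refine .of_ker hs 1 (by simp [huu]) (.of_ker (u := ⟨w, huw⟩) (hs.domRestrict _) (-1)
      (by rw [LinearMap.domRestrict₁₂_apply, hww]; simp) ?_)
    refine isSignDiagonalizable_of_forall_intNorm_eq_zero
      ((hu.domRestrict_ker hu_unit).domRestrict_ker hw_unit) fun z => ?_
    exact le_antisymm (hpos z z.1.2) (hneg z z.2)

end UnimodularDiagonalization

section SelfOrthogonal

variable {R L L' : Type*} [CommRing R] [StarRing R] [AddCommGroup L] [Module R L]
  [AddCommGroup L'] [Module R L'] {h : L →ₗ⋆[R] L →ₗ[R] R} {h' : L' →ₗ⋆[R] L' →ₗ[R] R} {π : R}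

/-- `W` is its own orthogonal complement modulo `π`; for unimodular `h` this says that `W` is the
preimage of a Lagrangian subspace of `L / πL`. -/
def IsSelfOrthogonal (π : R) (h : L →ₗ⋆[R] L →ₗ[R] R) (W : Submodule R L) : Prop :=
  ∀ x, x ∈ W ↔ ∀ w ∈ W, π ∣ h x w

variable {V W : Submodule R L}

theorem IsSelfOrthogonal.smul_mem (hW : IsSelfOrthogonal π h W) (hπ : π ∣ star π) (x : L) :
    π • x ∈ W :=
  (hW _).2 fun w _ => by
    rw [LinearMap.map_smulₛₗ, LinearMap.smul_apply, starRingEnd_apply]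
    exact hπ.mul_right _

theorem IsSelfOrthogonal.eq_of_le (hW : IsSelfOrthogonal π h W) (hV : IsSelfOrthogonal π h V)
    (hle : W ≤ V) : W = V :=
  hle.antisymm fun x hx => (hW x).2 fun w hw => (hV x).1 hx w (hle hw)

theorem IsSelfOrthogonal.map (hW : IsSelfOrthogonal π h W) (g : L ≃ₗ[R] L')
    (hg : ∀ x y, h' (g x) (g y) = h x y) : IsSelfOrthogonal π h' (W.map g.toLinearMap) := by
  refine g.surjective.forall.2 fun x => ?_
  simp only [Submodule.mem_map, forall_exists_index, and_imp, forall_apply_eq_imp_iff₂,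
    LinearEquiv.coe_coe, hg, g.injective.eq_iff, exists_eq_right, hW x]

theorem exists_reflection (hs : h.IsSymm) {r : L} {c : R} (hc : c * h r r = 1) :
    ∃ g : L ≃ₗ[R] L, (∀ x y, h (g x) (g y) = h x y) ∧ (∀ x, g (g x) = x) ∧
      ∀ x, g x = x - (2 * c * h r x) • r := by
  have hstar : star c = c := by
    have hc' := congrArg star hc
    rw [star_mul', star_one, show star (h r r) = h r r from hs.eq r r] at hc'
    linear_combination c * hc' - star c * hc
  have hr : ((2 * c) • h r) r = 2 := by
    rw [LinearMap.smul_apply, smul_eq_mul, mul_assoc, hc, mul_one]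
  have hg (x : L) : Module.reflection hr x = x - (2 * c * h r x) • r := Module.reflection_apply x hr
  refine ⟨Module.reflection hr, fun x y => ?_, Module.involutive_reflection hr, hg⟩
  simp only [hg, map_sub, LinearMap.sub_apply, LinearMap.map_smulₛₗ, LinearMap.smul_apply,
    smul_eq_mul, map_mul, hs.eq, starRingEnd_apply, hstar, star_ofNat, RingHom.id_apply]
  linear_combination (4 * c * h x r * h r y) * hc

end SelfOrthogonal

section LagrangianTransitivity

open Eis

variable {L : Type*} [AddCommGroup L] [Module Eis L] {h : L →ₗ⋆[Eis] L →ₗ[Eis] Eis}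
  {V W : Submodule Eis L}

theorem Eis.theta_dvd_star_theta : theta ∣ star theta := by
  rw [star_theta, dvd_neg]

theorem Eis.exists_dvd_theta_and_theta_dvd_sub (a : Eis) : ∃ c, c ∣ theta ∧ theta ∣ a - c := by
  obtain ha | ha | ha : modTheta a = 0 ∨ modTheta a = 1 ∨ modTheta a = -1 := by
    generalize modTheta a = b
    decide +revert
  · exact ⟨theta, dvd_rfl, dvd_sub_self_right.2 (modTheta_eq_zero.1 ha)⟩
  · exact ⟨1, one_dvd _, modTheta_eq_zero.1 (by simp [ha])⟩
  · exact ⟨-1, isUnit_one.neg.dvd, modTheta_eq_zero.1 (by simp [ha])⟩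

theorem modTheta_apply_add_theta_smul (h : L →ₗ⋆[Eis] L →ₗ[Eis] Eis) (x t y : L) :
    modTheta (h (x + theta • t) y) = modTheta (h x y) := by
  rw [map_add, LinearMap.add_apply, LinearMap.map_smulₛₗ, LinearMap.smul_apply, map_add,
    smul_eq_mul, starRingEnd_apply, modTheta_eq_zero.2 (theta_dvd_star_theta.mul_right _), add_zero]

theorem exists_norm_add_theta_smul_eq (hs : h.IsSymm) {e f : L} (hee : h e e = 0) (hef : h e f = 1)
    {x : L} {n : ℤ} (hx : modTheta (h x x) = n) :
    ∃ t : L, h (x + theta • t) (x + theta • t) = n := by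
  have hfe : h f e = 1 := by rw [← hs.eq, hef, map_one]
  -- first arrange that `⟨y, e⟩ = c` divides `θ`, so that `⟨θ d ⟨0, j⟩ e, y⟩` can have any trace
  -- divisible by `3`
  obtain ⟨c, ⟨d, hd⟩, k, hk⟩ := exists_dvd_theta_and_theta_dvd_sub (h x e)
  let y : L := x + theta • star k • f
  have hye : h y e = c := by
    simp only [y, map_add, LinearMap.map_smulₛₗ, LinearMap.add_apply, LinearMap.smul_apply, hfe,
      starRingEnd_apply, star_star, star_theta, smul_eq_mul]
    linear_combination hk
  have hey : h e y = star c := by rw [← hs.eq, hye, starRingEnd_apply]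
  obtain ⟨j, hj⟩ : (3 : ℤ) ∣ n - intNorm h y := by
    rw [← Nat.cast_ofNat, ← ZMod.intCast_eq_intCast_iff_dvd_sub, ← hx, ← map_intCast modTheta,
      intCast_intNorm hs, modTheta_apply_add_theta_smul, ← hs.eq, starRingEnd_apply, modTheta_star,
      modTheta_apply_add_theta_smul]
  let l : Eis := d * ⟨0, j⟩
  have hl : theta * l * c + star (theta * l * c) = 3 * j := by
    have : theta * l * c = -3 * ⟨0, j⟩ := by
      rw [← theta_mul_theta]
      simp only [l]
      linear_combination (-theta * ⟨0, j⟩) * hd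
    rw [this]
    ext <;> simp
  refine ⟨star k • f + l • e, ?_⟩
  rw [smul_add, ← add_assoc, smul_smul theta l]
  change h (y + (theta * l) • e) (y + (theta * l) • e) = n
  simp only [map_add, LinearMap.map_smulₛₗ, LinearMap.add_apply, LinearMap.smul_apply, hee, hey,
    hye, smul_eq_mul, mul_zero, add_zero, starRingEnd_apply, RingHom.id_apply,
    ← intCast_intNorm hs y]
  rw [star_mul' _ c] at hl
  have hj' : (n : Eis) - intNorm h y = 3 * j := mod_cast congrArg (Int.cast (R := Eis)) hj
  linear_combination hl - hj'

theorem exists_unit_norm_sub_add_theta_smul (hs : h.IsSymm) {e f : L} (hee : h e e = 0)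
    (hef : h e f = 1) {x y : L} (hxx : theta ∣ h x x) (hyy : theta ∣ h y y)
    (hxy : ¬ theta ∣ h x y) :
    ∃ (t : L) (c : Eis), c * h (x - y + theta • t) (x - y + theta • t) = 1 ∧
      theta ∣ 2 * c * h (x - y + theta • t) y + 1 := by
  simp only [← modTheta_eq_zero] at hxx hyy hxy
  obtain ⟨ε, hε⟩ : ∃ ε : ℤˣ, modTheta (h x y) = (ε : ℤ) := by
    revert hxy
    generalize modTheta (h x y) = a
    decide +revert
  have hyx : modTheta (h y x) = (ε : ℤ) := by rw [← hs.eq, starRingEnd_apply, modTheta_star, hε]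
  have hnorm : modTheta (h (x - y) (x - y)) = (ε : ℤ) := by
    simp only [map_sub, LinearMap.sub_apply, hxx, hyy, hyx, hε]
    linear_combination -(ε : ZMod 3) * (by decide : (3 : ZMod 3) = 0)
  have hεε : (ε : ℤ) * ε = 1 := by rw [← Units.val_mul, Int.units_mul_self, Units.val_one]
  obtain ⟨t, ht⟩ := exists_norm_add_theta_smul_eq hs hee hef hnorm
  refine ⟨t, (ε : ℤ), by rw [ht]; exact_mod_cast hεε, modTheta_eq_zero.1 ?_⟩
  have hεε' : ((ε : ℤ) : ZMod 3) * (ε : ℤ) = 1 := mod_cast congrArg (Int.cast (R := ZMod 3)) hεε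
  rw [map_add, map_mul, modTheta_apply_add_theta_smul, map_sub, LinearMap.sub_apply, map_sub, hyy,
    hε, map_mul, map_intCast, map_ofNat, map_one]
  linear_combination 2 * hεε' + (by decide : (3 : ZMod 3) = 0)

theorem IsSelfOrthogonal.exists_inf_lt_map_inf (hs : h.IsSymm) {e f : L} (hee : h e e = 0)
    (hef : h e f = 1) (hW : IsSelfOrthogonal theta h W) (hV : IsSelfOrthogonal theta h V)
    (hWV : ¬ W ≤ V) :
    ∃ g : L ≃ₗ[Eis] L, (∀ x y, h (g x) (g y) = h x y) ∧ W ⊓ V < W.map g.toLinearMap ⊓ V := by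
  obtain ⟨x, hxW, hxV⟩ := SetLike.not_le_iff_exists.1 hWV
  obtain ⟨y, hyV, hxy⟩ : ∃ y ∈ V, ¬ theta ∣ h x y := by simpa [hV x] using hxV
  obtain ⟨t, c, hc, hcy⟩ := exists_unit_norm_sub_add_theta_smul hs hee hef
    ((hW x).1 hxW x hxW) ((hV y).1 hyV y hyV) hxy
  set r := x - y + theta • t with hr
  obtain ⟨g, hg, hinv, hg_apply⟩ := exists_reflection hs hc
  have htheta := hW.smul_mem theta_dvd_star_theta
  have hmem {z : L} (hz : g z ∈ W) : z ∈ W.map g.toLinearMap := ⟨g z, hz, hinv z⟩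
  have hgy : g y ∈ W := by
    obtain ⟨k, hk⟩ := hcy
    have : g y = x + theta • (t - k • r) := by
      rw [hg_apply, eq_sub_of_add_eq hk, sub_smul, one_smul, smul_sub, smul_smul, hr]
      abel
    rw [this]
    exact W.add_mem hxW (htheta _)
  have hfix {z : L} (hzW : z ∈ W) (hzV : z ∈ V) : g z ∈ W := by
    have hrz : theta ∣ h r z := by
      rw [← modTheta_eq_zero, hr, modTheta_apply_add_theta_smul, modTheta_eq_zero, map_sub]
      exact dvd_sub ((hW x).1 hxW z hzW) ((hV y).1 hyV z hzV)
    obtain ⟨k, hk⟩ := hrz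
    rw [hg_apply, hk, mul_left_comm, mul_smul]
    exact W.sub_mem hzW (htheta _)
  have hle : W ⊓ V ≤ W.map g.toLinearMap ⊓ V := fun z hz => ⟨hmem (hfix hz.1 hz.2), hz.2⟩
  exact ⟨g, hg, hle.lt_of_not_ge fun hge => hxy ((hW x).1 hxW y (hge ⟨hmem hgy, hyV⟩).1)⟩

theorem IsSelfOrthogonal.exists_isometry_map_eq [IsNoetherian Eis L] (hs : h.IsSymm) {e f : L}
    (hee : h e e = 0) (hef : h e f = 1) (hW : IsSelfOrthogonal theta h W)
    (hV : IsSelfOrthogonal theta h V) :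
    ∃ g : L ≃ₗ[Eis] L, (∀ x y, h (g x) (g y) = h x y) ∧ W.map g.toLinearMap = V := by
  induction hD : W ⊓ V using WellFoundedGT.induction generalizing W with
  | ind D ih =>
    by_cases hle : W ≤ V
    · exact ⟨.refl Eis L, fun _ _ => rfl, (Submodule.map_id W).trans (hW.eq_of_le hV hle)⟩
    obtain ⟨g, hg, hlt⟩ := hW.exists_inf_lt_map_inf hs hee hef hV hle
    obtain ⟨g', hg', hmap⟩ := ih _ (hD ▸ hlt) (hW.map g hg) rfl
    exact ⟨g.trans g', fun x y => by simp [hg', hg], by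
      rw [← hmap, ← Submodule.map_comp, LinearEquiv.comp_coe]⟩

end LagrangianTransitivity

section Overlattice

variable {R L L' S S' : Type*} [CommRing R] [StarRing R] [AddCommGroup L] [Module R L]
  [AddCommGroup L'] [Module R L'] [AddCommGroup S] [Module R S] [AddCommGroup S'] [Module R S']
  {h : L →ₗ⋆[R] L →ₗ[R] R} {h' : L' →ₗ⋆[R] L' →ₗ[R] R} {k : S →ₗ⋆[R] S →ₗ[R] R}
  {k' : S' →ₗ⋆[R] S' →ₗ[R] R} {π : R}

theorem exists_isSelfOrthogonal [IsNoetherian R L] (hs : h.IsSymm) (hπ : π ∣ star π)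
    (hdvd : ∀ x, π ∣ h x x) : ∃ S : Submodule R L, IsSelfOrthogonal π h S := by
  obtain ⟨S, hS, hmax⟩ := exists_maximal_of_wellFoundedGT
    (fun S : Submodule R L => ∀ x ∈ S, ∀ y ∈ S, π ∣ h x y) ⟨⊥, by simp⟩
  have hdvd_symm {x y : L} (hxy : π ∣ h x y) : π ∣ h y x := by
    obtain ⟨c, hc⟩ := hxy
    rw [← hs.eq, hc, starRingEnd_apply, star_mul']
    exact hπ.mul_right _
  refine ⟨S, fun x => ⟨fun hx => hS x hx, fun hx => ?_⟩⟩
  suffices ∀ y ∈ S ⊔ R ∙ x, ∀ z ∈ S ⊔ R ∙ x, π ∣ h y z from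
    hmax this le_sup_left (Submodule.mem_sup_right (Submodule.mem_span_singleton_self x))
  simp only [Submodule.mem_sup, Submodule.mem_span_singleton]
  rintro _ ⟨y, hy, _, ⟨c, rfl⟩, rfl⟩ _ ⟨z, hz, _, ⟨d, rfl⟩, rfl⟩
  simp only [map_add, LinearMap.add_apply, LinearMap.map_smulₛₗ, LinearMap.smul_apply, smul_eq_mul]
  exact dvd_add (dvd_add (hS y hy z hz) ((hx z hz).mul_left _))
    (((hdvd_symm (hx y hy)).add ((hdvd x).mul_left _)).mul_left _)

/-- `j` embeds `(L, h)` isometrically into `(S, k)` as a submodule self-orthogonal modulo `π`. -/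
structure IsLagrangianEmbedding (π : R) (h : L →ₗ⋆[R] L →ₗ[R] R) (k : S →ₗ⋆[R] S →ₗ[R] R)
    (j : L →ₗ[R] S) : Prop where
  injective : Function.Injective j
  apply_apply (x y : L) : k (j x) (j y) = h x y
  isSelfOrthogonal_range : IsSelfOrthogonal π k j.range

theorem IsLagrangianEmbedding.exists_isometry {j : L →ₗ[R] S} {j' : L' →ₗ[R] S'}
    (hj : IsLagrangianEmbedding π h k j) (hj' : IsLagrangianEmbedding π h' k' j') (g : S ≃ₗ[R] S')
    (hg : ∀ x y, k' (g x) (g y) = k x y) (hmap : j.range.map g.toLinearMap = j'.range) :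
    ∃ ψ : L ≃ₗ[R] L', ∀ x y, h' (ψ x) (ψ y) = h x y := by
  let ψ : L ≃ₗ[R] L' := (LinearEquiv.ofInjective j hj.injective).trans <|
    (g.submoduleMap j.range).trans <| (LinearEquiv.ofEq _ _ hmap).trans
      (LinearEquiv.ofInjective j' hj'.injective).symm
  have hψ (x : L) : j' (ψ x) = g (j x) :=
    congrArg Subtype.val ((LinearEquiv.ofInjective j' hj'.injective).apply_symm_apply _)
  exact ⟨ψ, fun x y => by rw [← hj'.apply_apply, hψ, hψ, hg, hj.apply_apply]⟩

variable [IsDomain R]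

theorem IsSelfOrthogonal.exists_mul_apply_eq {W : Submodule R L} (hW : IsSelfOrthogonal π h W)
    (hπ0 : π ≠ 0) : ∃ k : W →ₗ⋆[R] W →ₗ[R] R, ∀ x y : W, π * k x y = h x y := by
  have hrow (x : W) : ∃ f : W →ₗ[R] R, π • f = h.domRestrict₁₂ W W x :=
    exists_smul_eq_of_forall_exists hπ0 fun y => ((hW x).1 x.2 y y.2).imp fun _ => Eq.symm
  obtain ⟨k, hk⟩ := exists_smul_eq_of_forall_exists (f := h.domRestrict₁₂ W W) hπ0 hrow
  exact ⟨k, fun x y => LinearMap.congr_fun (LinearMap.congr_fun hk x) y⟩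

section RescaledForm

variable {W : Submodule R L} {k : W →ₗ⋆[R] W →ₗ[R] R} {j : L →ₗ[R] W}

theorem star_mul_apply_of_mul_apply_eq (hπ0 : π ≠ 0) (hk : ∀ x y : W, π * star π * k x y = h x y)
    (hj : ∀ x, (j x : L) = π • x) (x : W) (y : L) : star π * k x (j y) = h x y :=
  mul_left_cancel₀ hπ0 <| by rw [← mul_assoc, hk, hj, map_smul, smul_eq_mul]

theorem IsModular.isUnimodular_of_mul_apply_eq (hh : IsModular π h) (hπ0 : π ≠ 0)
    (hπ : π ∣ star π) (hW : IsSelfOrthogonal (π * star π) h W)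
    (hk : ∀ x y : W, π * star π * k x y = h x y) (hj : ∀ x, (j x : L) = π • x) :
    IsUnimodular k := by
  have hν0 : π * star π ≠ 0 := mul_ne_zero hπ0 (star_ne_zero.2 hπ0)
  refine ⟨⟨fun x y => mul_left_cancel₀ hν0 ?_⟩, fun x y hxy => ?_, fun _ _ => one_dvd _,
    fun f => ?_⟩
  · rw [hk, ← hh.isSymm.eq, ← hk, map_mul, starRingEnd_apply (π * _), star_mul_star]
  · refine Subtype.ext (hh.injective (LinearMap.ext fun z => ?_))
    rw [← star_mul_apply_of_mul_apply_eq hπ0 hk hj, hxy, star_mul_apply_of_mul_apply_eq hπ0 hk hj]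
  · obtain ⟨x, hx⟩ := hh.exists_eq_smul (f ∘ₗ j)
    obtain ⟨u, hu⟩ := hπ
    have hjw (w : W) : j w = π • w := Subtype.ext (hj w)
    have hxw (w : W) : h (star u • x) w = π * star π * f w := by
      rw [LinearMap.map_smulₛₗ, LinearMap.smul_apply, hx, LinearMap.smul_apply,
        LinearMap.comp_apply, hjw, map_smul, starRingEnd_apply, star_star, hu]
      simp only [smul_eq_mul]
      ring
    have hmem : star u • x ∈ W := (hW _).2 fun w hw => ⟨f ⟨w, hw⟩, hxw ⟨w, hw⟩⟩
    refine ⟨⟨_, hmem⟩, LinearMap.ext fun w => mul_left_cancel₀ hν0 ?_⟩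
    rw [hk, hxw, one_smul]

theorem IsModular.isLagrangianEmbedding_of_mul_apply_eq (hh : IsModular π h) (hπ0 : π ≠ 0)
    (hk : ∀ x y : W, π * star π * k x y = h x y) (hj : ∀ x, (j x : L) = π • x) :
    IsLagrangianEmbedding π h k j := by
  have hkj (x y : L) : k (j x) (j y) = h x y := by
    refine mul_left_cancel₀ (star_ne_zero.2 hπ0) ?_
    rw [star_mul_apply_of_mul_apply_eq hπ0 hk hj, hj, LinearMap.map_smulₛₗ, LinearMap.smul_apply,
      starRingEnd_apply, smul_eq_mul]
  refine ⟨fun x y hxy => hh.injective (LinearMap.ext fun z => ?_), hkj, fun x => ⟨?_, fun hx => ?_⟩⟩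
  · rw [← hkj, hxy, hkj]
  · rintro ⟨y, rfl⟩ _ ⟨z, rfl⟩
    exact hkj y z ▸ hh.dvd y z
  · obtain ⟨f, hf⟩ := exists_smul_eq_of_forall_exists (f := k x ∘ₗ j) hπ0
      fun y => (hx (j y) ⟨y, rfl⟩).imp fun _ => Eq.symm
    obtain ⟨z, hz⟩ := hh.exists_eq_smul f
    refine ⟨z, Subtype.ext (hh.injective (LinearMap.ext fun y => ?_))⟩
    rw [hj, LinearMap.map_smulₛₗ, LinearMap.smul_apply, hz, hf, starRingEnd_apply,
      LinearMap.comp_apply, smul_eq_mul, star_mul_apply_of_mul_apply_eq hπ0 hk hj]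

end RescaledForm

theorem IsModular.exists_isLagrangianEmbedding [IsNoetherian R L] (hh : IsModular π h)
    (hπ0 : π ≠ 0) (hπ : π ∣ star π) (hdvd : ∀ x, π * star π ∣ h x x) :
    ∃ (W : Submodule R L) (k : W →ₗ⋆[R] W →ₗ[R] R) (j : L →ₗ[R] W),
      IsUnimodular k ∧ IsLagrangianEmbedding π h k j := by
  obtain ⟨W, hW⟩ := exists_isSelfOrthogonal hh.isSymm (by rw [star_mul_star]) hdvd
  obtain ⟨k, hk⟩ := hW.exists_mul_apply_eq (mul_ne_zero hπ0 (star_ne_zero.2 hπ0))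
  have hmem (x : L) : π • x ∈ W := (hW _).2 fun w _ => by
    rw [LinearMap.map_smulₛₗ, LinearMap.smul_apply, starRingEnd_apply, smul_eq_mul, mul_comm π]
    exact mul_dvd_mul_left _ (hh.dvd x w)
  let j : L →ₗ[R] W := (LinearMap.lsmul R L π).codRestrict W hmem
  have hj (x : L) : (j x : L) = π • x := rfl
  exact ⟨W, k, j, hh.isUnimodular_of_mul_apply_eq hπ0 hπ hW hk hj,
    hh.isLagrangianEmbedding_of_mul_apply_eq hπ0 hk hj⟩

end Overlattice

section Uniqueness

open Eis Module

variable {L L' S S' : Type*} [AddCommGroup L] [Module Eis L] [AddCommGroup L'] [Module Eis L']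
  [AddCommGroup S] [Module Eis S] [AddCommGroup S'] [Module Eis S']
  {h : L →ₗ⋆[Eis] L →ₗ[Eis] Eis} {h' : L' →ₗ⋆[Eis] L' →ₗ[Eis] Eis} {k : S →ₗ⋆[Eis] S →ₗ[Eis] Eis}
  {k' : S' →ₗ⋆[Eis] S' →ₗ[Eis] Eis} {j : L →ₗ[Eis] S} {j' : L' →ₗ[Eis] S'} {p : ℤˣ → ℕ}

/-- The Hermitian form `h` has signature `(p 1, p (-1))`: its rank is at least `p 1 + p (-1)`, and
an orthogonal family of vectors whose norms have sign `s` has at most `p s` members. -/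
structure HasInertia (p : ℤˣ → ℕ) (h : L →ₗ⋆[Eis] L →ₗ[Eis] Eis) : Prop where
  le_finrank : p 1 + p (-1) ≤ finrank Eis L
  card_le (s : ℤˣ) {ι : Type} [Fintype ι] [DecidableEq ι] {e : ι → L} {a : ι → ℤ}
    (ha : ∀ i, 0 < s * a i) (he : HasDiagonalGram h e fun i => (a i : Eis)) : Fintype.card ι ≤ p s

theorem Eis.three_dvd_intCast_of_theta_dvd {a : ℤ} (ha : theta ∣ a) : (3 : Eis) ∣ a := by
  rw [← modTheta_eq_zero, map_intCast, ZMod.intCast_zmod_eq_zero_iff_dvd] at ha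
  exact_mod_cast map_dvd (Int.castRingHom Eis) ha

theorem IsModular.theta_mul_star_theta_dvd_apply_self (hh : IsModular theta h) (x : L) :
    theta * star theta ∣ h x x := by
  have hx := hh.dvd x x
  rw [← intCast_intNorm hh.isSymm] at hx ⊢
  exact theta_mul_star_theta ▸ three_dvd_intCast_of_theta_dvd hx

theorem IsLagrangianEmbedding.isIndefinite {π : Eis} (hj : IsLagrangianEmbedding π h k j)
    (hi : IsIndefinite h) : IsIndefinite k := by
  have hnorm (x : L) : intNorm k (j x) = intNorm h x := congrArg _ (hj.apply_apply x x)
  exact ⟨hi.1.imp' j fun x => (hnorm x).symm ▸ id, hi.2.imp' j fun x => (hnorm x).symm ▸ id⟩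

theorem card_one_add_card_neg_one {ι : Type*} [Fintype ι] (ε : ι → ℤˣ) :
    Fintype.card {i // ε i = 1} + Fintype.card {i // ε i = -1} = Fintype.card ι := by
  rw [← Fintype.card_congr (Equiv.sumCompl fun i => ε i = 1), Fintype.card_sum]
  simp only [Int.units_ne_iff_eq_neg, ← ne_eq]

theorem IsLagrangianEmbedding.card_le (hj : IsLagrangianEmbedding theta h k j)
    (hp : HasInertia p h) {ι : Type} [Fintype ι] [DecidableEq ι] {e : ι → S} {ε : ι → ℤˣ}
    (he : HasDiagonalGram k e fun i => ((ε i : ℤ) : Eis)) (s : ℤˣ) :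
    Fintype.card {i // ε i = s} ≤ p s := by
  choose x hx using fun i => hj.isSelfOrthogonal_range.smul_mem theta_dvd_star_theta (e i)
  refine hp.card_le s (e := fun i : {i // ε i = s} => x i) (a := fun i => 3 * ε i) (fun i => ?_)
    fun a b => ?_
  · rw [i.2, mul_left_comm, Int.units_coe_mul_self]
    norm_num
  · rw [← hj.apply_apply, hx, hx, map_smul, LinearMap.map_smulₛₗ, LinearMap.smul_apply, he,
      starRingEnd_apply, smul_eq_mul, smul_eq_mul, ← mul_assoc, theta_mul_star_theta]
    simp [Subtype.ext_iff]

theorem IsLagrangianEmbedding.card_eq (hj : IsLagrangianEmbedding theta h k j)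
    (hp : HasInertia p h) {ι : Type} [Fintype ι] [DecidableEq ι] {B : Basis ι Eis S} {ε : ι → ℤˣ}
    (hB : HasDiagonalGram k B fun i => ((ε i : ℤ) : Eis)) (s : ℤˣ) :
    Fintype.card {i // ε i = s} = p s := by
  have := Module.Finite.of_basis B
  have hrank : p 1 + p (-1) ≤ Fintype.card ι :=
    (hp.le_finrank.trans (LinearMap.finrank_le_finrank_of_injective hj.injective)).trans_eq
      (finrank_eq_card_basis B)
  have hsum := card_one_add_card_neg_one ε
  have hpos := hj.card_le hp hB 1
  have hneg := hj.card_le hp hB (-1)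
  obtain rfl | rfl := Int.units_eq_one_or s <;> lia

theorem IsLagrangianEmbedding.exists_isometry_of_isUnimodular [Free Eis S] [Module.Finite Eis S]
    [Free Eis S'] [Module.Finite Eis S'] (hj : IsLagrangianEmbedding theta h k j)
    (hj' : IsLagrangianEmbedding theta h' k' j') (hu : IsUnimodular k) (hu' : IsUnimodular k')
    (hi : IsIndefinite k) (hi' : IsIndefinite k') (hp : HasInertia p h) (hp' : HasInertia p h') :
    ∃ ψ : L ≃ₗ[Eis] L', ∀ x y, h' (ψ x) (ψ y) = h x y := by
  obtain ⟨_, B, ε, hB⟩ := hi.isSignDiagonalizable hu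
  obtain ⟨_, B', ε', hB'⟩ := hi'.isSignDiagonalizable hu'
  let σ := Equiv.ofFiberEquiv (f := ε) (g := ε') fun s =>
    Fintype.equivOfCardEq ((hj.card_eq hp hB s).trans (hj'.card_eq hp' hB' s).symm)
  obtain ⟨g, hg⟩ := hB.exists_isometry hB' σ fun i =>
    congrArg (fun s : ℤˣ => ((s : ℤ) : Eis)) (Equiv.ofFiberEquiv_map _ i)
  obtain ⟨v, hv, hvv⟩ := hi'.exists_isotropic hu'
  obtain ⟨e, f, hee, hef⟩ := hu'.exists_hyperbolic_pair hv hvv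
  obtain ⟨r, hr, hmap⟩ := (hj.isSelfOrthogonal_range.map g hg).exists_isometry_map_eq hu'.isSymm
    hee hef hj'.isSelfOrthogonal_range
  refine hj.exists_isometry hj' (g.trans r) (fun x y => (hr _ _).trans (hg x y)) ?_
  rw [← hmap, ← Submodule.map_comp, LinearEquiv.comp_coe]

theorem IsModular.exists_isometry_of_hasInertia [Free Eis L] [Module.Finite Eis L] [Free Eis L']
    [Module.Finite Eis L'] (hh : IsModular theta h) (hh' : IsModular theta h')
    (hi : IsIndefinite h) (hi' : IsIndefinite h') (hp : HasInertia p h) (hp' : HasInertia p h') :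
    ∃ ψ : L ≃ₗ[Eis] L', ∀ x y, h' (ψ x) (ψ y) = h x y := by
  obtain ⟨W, k, j, hu, hj⟩ := hh.exists_isLagrangianEmbedding theta_ne_zero theta_dvd_star_theta
    hh.theta_mul_star_theta_dvd_apply_self
  obtain ⟨W', k', j', hu', hj'⟩ := hh'.exists_isLagrangianEmbedding theta_ne_zero
    theta_dvd_star_theta hh'.theta_mul_star_theta_dvd_apply_self
  exact hj.exists_isometry_of_isUnimodular hj' hu hu' (hj.isIndefinite hi) (hj'.isIndefinite hi')
    hp hp'

end Uniqueness

section ComplexEmbedding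

theorem isPrimitiveRoot_ω : IsPrimitiveRoot ω 3 := by
  simpa only [ω, Nat.cast_ofNat] using Complex.isPrimitiveRoot_exp 3 three_ne_zero

theorem ω_mul_ω : ω * ω = -1 - ω := by
  have hsum := isPrimitiveRoot_ω.geom_sum_eq_zero (by norm_num)
  simp only [Finset.sum_range_succ, Finset.range_zero, Finset.sum_empty] at hsum
  linear_combination hsum

theorem norm_ω : ‖ω‖ = 1 := isPrimitiveRoot_ω.norm'_eq_one three_ne_zero

theorem conj_ω : conj ω = -1 - ω := by
  rw [← Complex.inv_eq_conj norm_ω, ← ω_mul_ω]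
  refine inv_eq_of_mul_eq_one_right ?_
  rw [← pow_two, ← pow_succ', isPrimitiveRoot_ω.pow_eq_one]

theorem im_ω_ne_zero : ω.im ≠ 0 := by
  intro him
  have hfix : ω = -1 - ω := (Complex.conj_eq_iff_im.2 him).symm.trans conj_ω
  have hsq := ω_mul_ω
  norm_num [show ω = -1 / 2 by linear_combination hfix / 2] at hsq

namespace Eis

/-- The embedding of `ℰ` into the complex numbers. -/
def toComplex : Eis →+* ℂ :=
  (QuadraticAlgebra.lift ⟨ω, by simp [ω_mul_ω, sub_eq_add_neg]⟩ : Eis →ₐ[ℤ] ℂ)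

theorem toComplex_apply (z : Eis) : toComplex z = z.re + z.im * ω := by
  simp [toComplex, QuadraticAlgebra.lift]

theorem toComplex_star (z : Eis) : toComplex (star z) = conj (toComplex z) := by
  simp only [toComplex_apply, QuadraticAlgebra.re_star, QuadraticAlgebra.im_star, map_add, map_mul,
    map_intCast, conj_ω]
  push_cast
  ring

theorem toComplex_theta : toComplex theta = θ := by
  rw [toComplex_apply, theta, θ, conj_ω]
  push_cast
  ring

theorem toComplex_injective : Function.Injective toComplex := by
  refine (injective_iff_map_eq_zero _).2 fun z hz => norm_eq_zero.1 ?_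
  have hnorm : toComplex (z.norm : Eis) = 0 := by rw [intCast_norm, map_mul, hz, zero_mul]
  rwa [map_intCast, Int.cast_eq_zero] at hnorm

theorem eisP_iff {z : ℂ} : EisP z ↔ ∃ y, toComplex y = z := by
  refine ⟨fun ⟨a, b, hz⟩ => ⟨⟨a, b⟩, hz ▸ toComplex_apply _⟩, ?_⟩
  rintro ⟨y, rfl⟩
  exact ⟨y.re, y.im, toComplex_apply y⟩

theorem isUnit_of_eisUnit_toComplex {u : Eis} (hu : EisUnit (toComplex u)) : IsUnit u := by
  have hω : ω ^ 3 = 1 := isPrimitiveRoot_ω.pow_eq_one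
  have hpow : toComplex u ^ 6 = 1 := by
    obtain hz | hz | hz | hz | hz | hz := hu <;> rw [hz] <;> grind
  refine IsUnit.of_pow_eq_one (toComplex_injective ?_) (n := 6) (by norm_num)
  rw [map_pow, hpow, map_one]

theorem eisUnit_toComplex {u : Eis} (hu : IsUnit u) : EisUnit (toComplex u) := by
  have hnorm : u.norm = 1 := by
    obtain h | h := Int.isUnit_iff.1 (hu.map QuadraticAlgebra.norm)
    · exact h
    · exact absurd h (by have := norm_nonneg u; lia)
  have hsum := four_mul_norm u
  obtain ⟨a, b⟩ := u
  dsimp only at hsum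
  rw [hnorm] at hsum
  have hb : |b| ≤ 1 := (sq_le_one_iff_abs_le_one b).1 (by nlinarith [sq_nonneg (2 * a - b)])
  have ha : |a| ≤ 1 := (sq_le_one_iff_abs_le_one a).1 (by nlinarith [sq_nonneg (2 * b - a)])
  rw [abs_le] at ha hb
  have hω_sq : ω ^ 2 = -1 - ω := (pow_two ω).trans ω_mul_ω
  rw [EisUnit, hω_sq, toComplex_apply]
  obtain ⟨⟨_, _⟩, _, _⟩ := And.intro ha hb
  interval_cases a <;> interval_cases b <;> norm_num at hsum <;> simp <;> grind

end Eis

end ComplexEmbedding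

section MatrixForms

open scoped Matrix

variable {R ι : Type*} [CommRing R] [StarRing R] [Fintype ι] [DecidableEq ι]

/-- The sesquilinear form `⟨x, y⟩ = x* M y` on column vectors with Gram matrix `M`. -/
abbrev hermForm (M : Matrix ι ι R) : (ι → R) →ₗ⋆[R] (ι → R) →ₗ[R] R :=
  Matrix.toLinearMapₛₗ₂' R (starRingEnd R) (RingHom.id R) M

theorem hermForm_apply (M : Matrix ι ι R) (x y : ι → R) :
    hermForm M x y = star x ⬝ᵥ M *ᵥ y := by
  rw [Matrix.toLinearMapₛₗ₂'_apply]
  simp only [dotProduct, Matrix.mulVec, Finset.mul_sum, smul_eq_mul, starRingEnd_apply,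
    RingHom.id_apply, Pi.star_apply]
  exact Finset.sum_congr rfl fun i _ => Finset.sum_congr rfl fun j _ => by ring

theorem hermForm_mulVec_mulVec (M P : Matrix ι ι R) (x y : ι → R) :
    hermForm M (P *ᵥ x) (P *ᵥ y) = hermForm (Pᴴ * M * P) x y := by
  simp only [hermForm_apply, Matrix.star_mulVec, ← Matrix.dotProduct_mulVec,
    Matrix.mulVec_mulVec, Matrix.mul_assoc]

theorem eq_conjTranspose_mul_mul_of_hermForm {M N P : Matrix ι ι R}
    (hP : ∀ x y, hermForm M (P *ᵥ x) (P *ᵥ y) = hermForm N x y) : Pᴴ * M * P = N :=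
  (Matrix.toLinearMapₛₗ₂' R (starRingEnd R) (RingHom.id R)).injective <|
    LinearMap.ext fun x => LinearMap.ext fun y => by rw [← hP, hermForm_mulVec_mulVec]

theorem map_hermForm {A : Type*} [CommRing A] [StarRing A] (φ : R →+* A)
    (hφ : ∀ z, φ (star z) = star (φ z)) (M : Matrix ι ι R) (x y : ι → R) :
    φ (hermForm M x y) = hermForm (M.map φ) (φ ∘ x) (φ ∘ y) := by
  simp only [Matrix.toLinearMapₛₗ₂'_apply, map_sum, smul_eq_mul, map_mul, starRingEnd_apply, hφ,
    RingHom.id_apply, Function.comp_apply, Matrix.map_apply]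

theorem hermForm_isSymm {M : Matrix ι ι R} (hM : M.IsHermitian) : (hermForm M).IsSymm where
  eq x y := by
    rw [hermForm_apply, hermForm_apply, starRingEnd_apply, Matrix.star_dotProduct, star_star,
      Matrix.star_mulVec, hM.eq, Matrix.dotProduct_mulVec]

theorem isModular_hermForm_smul [IsDomain R] {π : R} (hπ0 : π ≠ 0) {V : Matrix ι ι R}
    (hV : IsUnit V.det) (hherm : (π • V).IsHermitian) : IsModular π (hermForm (π • V)) := by
  have hV' : IsUnit V := (Matrix.isUnit_iff_isUnit_det V).2 hV
  have happly (x y : ι → R) : hermForm (π • V) x y = π * (star x ᵥ* V) ⬝ᵥ y := by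
    rw [hermForm_apply, Matrix.smul_mulVec, dotProduct_smul, smul_eq_mul, Matrix.dotProduct_mulVec]
  refine ⟨hermForm_isSymm hherm, fun x y hxy => ?_, fun x y => ⟨_, happly x y⟩, fun f => ?_⟩
  · have hvec : star x ᵥ* V = star y ᵥ* V := dotProduct_eq _ _ fun z => mul_left_cancel₀ hπ0 <| by
      rw [← happly, ← happly, hxy]
    exact star_injective (Matrix.vecMul_injective_of_isUnit hV' hvec)
  · obtain ⟨x, hx⟩ := Matrix.vecMul_surjective_iff_isUnit.2 hV' fun i => f (Pi.single i 1)
    refine ⟨star x, LinearMap.pi_ext' fun i => LinearMap.ext_ring ?_⟩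
    rw [LinearMap.comp_apply, LinearMap.comp_apply, happly, star_star]
    simp only at hx
    simp [hx]

end MatrixForms

section GramMatrices

open Eis Matrix

theorem SelfDualTheta.exists_isModular {k : ℕ} {M : Matrix (Fin k) (Fin k) ℂ}
    (hM : SelfDualTheta M) :
    ∃ M₀ : Matrix (Fin k) (Fin k) Eis, M₀.map toComplex = M ∧ IsModular theta (hermForm M₀) := by
  obtain ⟨-, hherm, hent, hdet⟩ := hM
  choose U hU using fun i j => eisP_iff.1 (hent i j)
  have hUmap : toComplex.mapMatrix (of U) = θ • M⁻¹ := Matrix.ext hU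
  have hUunit : IsUnit (of U).det := isUnit_of_eisUnit_toComplex (by rwa [RingHom.map_det, hUmap])
  have hMinv : IsUnit (θ • M⁻¹).det := by rw [← hUmap, ← RingHom.map_det]; exact hUunit.map _
  have hMunit : IsUnit M.det := by
    rw [det_smul] at hMinv
    exact isUnit_nonsing_inv_det_iff.1 (isUnit_of_mul_isUnit_right hMinv)
  have hmap : (theta • (of U)⁻¹).map toComplex = M := by
    have hinv : toComplex.mapMatrix (of U)⁻¹ * (θ • M⁻¹) = 1 := by
      rw [← hUmap, ← map_mul, nonsing_inv_mul _ hUunit, map_one]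
    calc (theta • (of U)⁻¹).map toComplex
        = θ • toComplex.mapMatrix (of U)⁻¹ := by
          rw [← toComplex_theta]
          exact Matrix.ext fun i j => map_mul toComplex _ _
      _ = toComplex.mapMatrix (of U)⁻¹ * (θ • M⁻¹) * M := by
          rw [mul_assoc, smul_mul, nonsing_inv_mul _ hMunit, Matrix.mul_smul, mul_one]
      _ = M := by rw [hinv, one_mul]
  refine ⟨_, hmap, isModular_hermForm_smul theta_ne_zero (isUnit_nonsing_inv_det _ hUunit) ?_⟩
  refine Matrix.map_injective toComplex_injective ?_
  beta_reduce
  rw [conjTranspose_map _ toComplex_star, hmap, hherm.eq]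

end GramMatrices

section Inertia

open Module

theorem HasDiagonalGram.apply_sum_smul {R L ι : Type*} [CommRing R] [StarRing R] [AddCommGroup L]
    [Module R L] {h : L →ₗ⋆[R] L →ₗ[R] R} [Fintype ι] [DecidableEq ι] {e : ι → L} {a : ι → R}
    (he : HasDiagonalGram h e a) (c : ι → R) :
    h (∑ i, c i • e i) (∑ i, c i • e i) = ∑ i, star (c i) * c i * a i := by
  rw [map_sum]
  refine Finset.sum_congr rfl fun i _ => ?_
  simp only [map_smul, map_sum, LinearMap.sum_apply, LinearMap.map_smulₛₗ, LinearMap.smul_apply,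
    he _ i, smul_eq_mul, mul_ite, mul_zero, Finset.sum_ite_eq', Finset.mem_univ, if_true,
    starRingEnd_apply]
  ring

variable {V : Type*} [AddCommGroup V] [Module ℂ V] {h : V →ₗ⋆[ℂ] V →ₗ[ℂ] ℂ}
  {ι κ : Type*} [Fintype ι] [DecidableEq ι] [Fintype κ] [DecidableEq κ] {e : ι → V} {f : κ → V}
  {a : ι → ℝ} {b : κ → ℝ}

theorem HasDiagonalGram.re_apply_sum_smul (he : HasDiagonalGram h e fun i => (a i : ℂ))
    (c : ι → ℂ) :
    (h (∑ i, c i • e i) (∑ i, c i • e i)).re = ∑ i, Complex.normSq (c i) * a i := by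
  rw [he.apply_sum_smul, Complex.re_sum]
  refine Finset.sum_congr rfl fun i _ => ?_
  rw [← starRingEnd_apply, ← Complex.normSq_eq_conj_mul_self, ← Complex.ofReal_mul,
    Complex.ofReal_re]

theorem HasDiagonalGram.eq_zero_of_mul_re_apply_nonpos
    (he : HasDiagonalGram h e fun i => (a i : ℂ)) {s : ℝ} (ha : ∀ i, 0 < s * a i) {c : ι → ℂ}
    (hc : s * (h (∑ i, c i • e i) (∑ i, c i • e i)).re ≤ 0) (i : ι) : c i = 0 := by
  have hterm (i : ι) : 0 ≤ Complex.normSq (c i) * (s * a i) :=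
    mul_nonneg (Complex.normSq_nonneg _) (ha i).le
  simp only [he.re_apply_sum_smul, Finset.mul_sum, mul_left_comm s] at hc
  have hzero := (Fintype.sum_eq_zero_iff_of_nonneg hterm).1
    (hc.antisymm (Finset.sum_nonneg fun i _ => hterm i))
  exact Complex.normSq_eq_zero.1 ((mul_eq_zero.1 (congrFun hzero i)).resolve_right (ha i).ne')

theorem HasDiagonalGram.card_add_card_le_finrank [Module.Finite ℂ V]
    (he : HasDiagonalGram h e fun i => (a i : ℂ)) (hf : HasDiagonalGram h f fun i => (b i : ℂ))
    (ha : ∀ i, 0 < a i) (hb : ∀ i, b i < 0) :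
    Fintype.card ι + Fintype.card κ ≤ finrank ℂ V := by
  have hindep : LinearIndependent ℂ (Sum.elim e f) := by
    rw [Fintype.linearIndependent_iff]
    intro c hc
    simp only [Fintype.sum_sum_type, Sum.elim_inl, Sum.elim_inr] at hc
    have hce (i : ι) : c (.inl i) = 0 := by
      refine he.eq_zero_of_mul_re_apply_nonpos (s := 1) (c := fun i => c (.inl i))
        (by simpa only [one_mul] using ha) ?_ i
      rw [eq_neg_of_add_eq_zero_left hc, map_neg, map_neg, LinearMap.neg_apply, neg_neg,
        hf.re_apply_sum_smul, one_mul]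
      exact Finset.sum_nonpos fun i _ =>
        mul_nonpos_of_nonneg_of_nonpos (Complex.normSq_nonneg _) (hb i).le
    have hcf (i : κ) : c (.inr i) = 0 := by
      refine hf.eq_zero_of_mul_re_apply_nonpos (s := -1) (c := fun i => c (.inr i))
        (by simpa only [neg_one_mul, neg_pos] using hb) ?_ i
      rw [eq_neg_of_add_eq_zero_right hc]
      simp [hce]
    exact Sum.rec hce hcf
  simpa using hindep.fintype_card_le_finrank

end Inertia

section Density

open Eis

theorem Eis.exists_norm_toComplex_sub_le (z : ℂ) : ∃ y : Eis, ‖toComplex y - z‖ ≤ 2 := by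
  let b : ℝ := z.im / ω.im
  let a : ℝ := z.re - b * ω.re
  have hz : z = a + b * ω := by
    apply Complex.ext <;> simp [a, b, im_ω_ne_zero]
  have hfract (t : ℝ) : ‖((⌊t⌋ : ℂ) - t)‖ ≤ 1 := by
    rw [← Complex.ofReal_intCast, ← Complex.ofReal_sub, Complex.norm_real, norm_sub_rev,
      Int.self_sub_floor, Real.norm_of_nonneg (Int.fract_nonneg t)]
    exact (Int.fract_lt_one t).le
  refine ⟨⟨⌊a⌋, ⌊b⌋⟩, ?_⟩
  calc ‖toComplex ⟨⌊a⌋, ⌊b⌋⟩ - z‖ = ‖(⌊a⌋ - a : ℂ) + (⌊b⌋ - b) * ω‖ := by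
        rw [toComplex_apply, hz]
        ring_nf
    _ ≤ ‖(⌊a⌋ - a : ℂ)‖ + ‖(⌊b⌋ - b : ℂ)‖ * ‖ω‖ := (norm_add_le _ _).trans_eq (by rw [norm_mul])
    _ ≤ 2 := by rw [norm_ω]; linarith [hfract a, hfract b]

theorem Eis.denseRange_inv_smul_toComplex_comp {ι : Type*} [Finite ι] :
    DenseRange fun y : ℕ × (ι → Eis) => ((y.1 + 1 : ℂ)⁻¹ • (toComplex ∘ y.2) : ι → ℂ) := by
  have := Fintype.ofFinite ι
  refine Metric.denseRange_iff.2 fun x r hr => ?_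
  obtain ⟨N, hN⟩ := exists_nat_one_div_lt (half_pos hr)
  choose y hy using fun i => exists_norm_toComplex_sub_le ((N + 1 : ℂ) * x i)
  refine ⟨(N, y), (dist_pi_lt_iff hr).2 fun i => ?_⟩
  have hN0 : (N + 1 : ℂ) ≠ 0 := Nat.cast_add_one_ne_zero N
  have hdiff : (N + 1 : ℂ)⁻¹ * toComplex (y i) - x i =
      (N + 1 : ℂ)⁻¹ * (toComplex (y i) - (N + 1) * x i) := by
    field_simp
  have hnorm : ‖(N + 1 : ℂ)⁻¹‖ = 1 / ((N : ℝ) + 1) := by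
    rw [norm_inv, one_div]
    norm_cast
  rw [dist_comm, dist_eq_norm]
  calc ‖(N + 1 : ℂ)⁻¹ * toComplex (y i) - x i‖ ≤ 1 / ((N : ℝ) + 1) * 2 := by
        rw [hdiff, norm_mul, hnorm]
        gcongr
        exact hy i
    _ < r := by linarith

theorem exists_mul_intNorm_pos {ι : Type*} [Fintype ι] [DecidableEq ι] {M : Matrix ι ι Eis}
    (hs : (hermForm M).IsSymm) (s : ℤ) {x : ι → ℂ}
    (hx : 0 < s * (hermForm (M.map toComplex) x x).re) :
    ∃ y, 0 < s * intNorm (hermForm M) y := by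
  have hcont : Continuous fun x : ι → ℂ => s * (hermForm (M.map toComplex) x x).re := by
    simp only [Matrix.toLinearMapₛₗ₂'_apply, RingHom.id_apply]
    fun_prop
  obtain ⟨⟨N, y⟩, hy⟩ := denseRange_inv_smul_toComplex_comp.exists_mem_open
    (isOpen_lt continuous_const hcont) ⟨x, hx⟩
  have hscale : (hermForm (M.map toComplex) ((N + 1 : ℂ)⁻¹ • (toComplex ∘ y))
      ((N + 1 : ℂ)⁻¹ • (toComplex ∘ y))).re =
      Complex.normSq (N + 1 : ℂ)⁻¹ * intNorm (hermForm M) y := by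
    rw [map_smul, LinearMap.map_smulₛₗ, LinearMap.smul_apply, ← map_hermForm _ toComplex_star,
      ← intCast_intNorm hs, map_intCast, smul_eq_mul, smul_eq_mul, ← mul_assoc, Complex.mul_conj,
      ← Complex.ofReal_intCast, ← Complex.ofReal_mul, Complex.ofReal_re]
  refine ⟨y, ?_⟩
  have hpos : 0 < s * (Complex.normSq (N + 1 : ℂ)⁻¹ * intNorm (hermForm M) y) := hscale ▸ hy
  rw [mul_left_comm] at hpos
  exact_mod_cast pos_of_mul_pos_right hpos (Complex.normSq_nonneg _)

end Density

section Signature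

open Eis

variable {m n : ℕ}

theorem HasSignature.exists_hasDiagonalGram {M : Matrix (Fin (m + n)) (Fin (m + n)) ℂ}
    (hM : HasSignature m n M) :
    ∃ (e : Fin m → Fin (m + n) → ℂ) (f : Fin n → Fin (m + n) → ℂ),
      HasDiagonalGram (hermForm M) e (fun _ => ((1 : ℝ) : ℂ)) ∧
        HasDiagonalGram (hermForm M) f (fun _ => ((-1 : ℝ) : ℂ)) := by
  obtain ⟨P, -, hP⟩ := hM
  have hcol (i j : Fin (m + n)) : hermForm M (P.mulVec (Pi.single i 1)) (P.mulVec (Pi.single j 1)) =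
      if i = j then if (i : ℕ) < m then 1 else -1 else 0 := by
    rw [hermForm_mulVec_mulVec, hP, Matrix.toLinearMapₛₗ₂'_single, Matrix.diagonal_apply]
  exact ⟨fun i => P.mulVec (Pi.single (Fin.castAdd n i) 1),
    fun i => P.mulVec (Pi.single (Fin.natAdd m i) 1),
    fun i j => (hcol _ _).trans (by simp [Fin.ext_iff]),
    fun i j => (hcol _ _).trans (by simp [Fin.ext_iff])⟩

variable {M : Matrix (Fin (m + n)) (Fin (m + n)) Eis}

theorem HasSignature.isIndefinite (hM : HasSignature m n (M.map toComplex))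
    (hs : (hermForm M).IsSymm) (hm : 1 ≤ m) (hn : 1 ≤ n) : IsIndefinite (hermForm M) := by
  obtain ⟨e, f, he, hf⟩ := hM.exists_hasDiagonalGram
  obtain ⟨x, hx⟩ := exists_mul_intNorm_pos hs 1 (x := e ⟨0, hm⟩) (by simp [he _ _])
  obtain ⟨y, hy⟩ := exists_mul_intNorm_pos hs (-1) (x := f ⟨0, hn⟩) (by simp [hf _ _])
  exact ⟨⟨x, by lia⟩, y, by lia⟩

theorem HasSignature.hasInertia (hM : HasSignature m n (M.map toComplex)) :
    HasInertia (fun s => if s = 1 then m else n) (hermForm M) where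
  le_finrank := by simp [show (-1 : ℤˣ) ≠ 1 by decide]
  card_le s ι _ _ e' a ha he' := by
    obtain ⟨e, f, he, hf⟩ := hM.exists_hasDiagonalGram
    have hmap : HasDiagonalGram (hermForm (M.map toComplex)) (fun i => toComplex ∘ e' i)
        fun i => ((a i : ℝ) : ℂ) := fun i j => by
      rw [← map_hermForm _ toComplex_star, he', apply_ite toComplex, map_zero, map_intCast]
      simp only [Complex.ofReal_intCast]
    obtain rfl | rfl := Int.units_eq_one_or s
    · have hle := hmap.card_add_card_le_finrank hf
        (by simpa using ha) (fun _ => neg_one_lt_zero)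
      simpa using hle
    · have hle := he.card_add_card_le_finrank hmap
        (fun _ => one_pos) (by simpa using ha)
      simpa using hle

end Signature

/-- There is at most one indefinite `ℰ`-lattice `T` of signature `(m,n)` (with
`m, n ≥ 1`), up to isometry, satisfying `T = θT′`: any two Gram matrices of such
lattices differ by a change of basis over `ℰ`. -/
theorem stmt6 (m n : ℕ) (hm : 1 ≤ m) (hn : 1 ≤ n)
    (M N : Matrix (Fin (m + n)) (Fin (m + n)) ℂ)
    (hM : SelfDualTheta M) (hN : SelfDualTheta N)
    (hMs : HasSignature m n M) (hNs : HasSignature m n N) :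
    ∃ P : Matrix (Fin (m + n)) (Fin (m + n)) ℂ,
      (∀ i j, EisP (P i j)) ∧ EisUnit P.det ∧ P.conjTranspose * M * P = N := by
  obtain ⟨M, rfl, hMmod⟩ := hM.exists_isModular
  obtain ⟨N, rfl, hNmod⟩ := hN.exists_isModular
  obtain ⟨ψ, hψ⟩ := hNmod.exists_isometry_of_hasInertia hMmod
    (hNs.isIndefinite hNmod.isSymm hm hn) (hMs.isIndefinite hMmod.isSymm hm hn)
    hNs.hasInertia hMs.hasInertia
  let P := LinearMap.toMatrix' ψ.toLinearMap
  have hP : P.conjTranspose * M * P = N := eq_conjTranspose_mul_mul_of_hermForm fun x y => by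
    simp only [P, LinearMap.toMatrix'_mulVec, LinearEquiv.coe_coe, hψ]
  refine ⟨P.map Eis.toComplex, fun i j => Eis.eisP_iff.2 ⟨_, rfl⟩, ?_, ?_⟩
  · rw [← RingHom.mapMatrix_apply, ← RingHom.map_det, LinearMap.det_toMatrix']
    exact Eis.eisUnit_toComplex ψ.isUnit_det'
  · rw [← hP, Matrix.map_mul, Matrix.map_mul, Matrix.conjTranspose_map _ Eis.toComplex_star]

end Bimonster
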